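/- arXiv:2401.00441 — 2 statements merged into one kernel-verified Lean document; each statement's English description precedes it below -/
import Mathlib

section
/- Maximum-principle consequence for nodal structure: Let ε > 0 satisfy the smallness condition ε + ε^{2/(2+δ)}‖W₁‖_{L^∞} + ε‖W₂‖_{L^∞} + ε²‖V‖_{L^∞} ≤ c. Let u ∈ H¹(B(x,ε)) ∩ C⁰(closure of B(x,ε)) be a real-valued weak solution of −Δu − ∇·(W₁u) + W₂·∇u + Vu = 0 in B(x,ε). If u > 0 on ∂B(x,ε), then u > 0 in B(x,ε). -/
open MeasureTheory Metric
open scoped RealInnerProductSpace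

noncomputable section

abbrev V2 := EuclideanSpace ℝ (Fin 2)

/-- Smooth compactly supported functions in `Ω`, a proxy for `H¹₀(Ω)`. -/
def H10c (Ω : Set V2) (u : V2 → ℝ) : Prop :=
  ContDiff ℝ (⊤ : ℕ∞) u ∧ HasCompactSupport u ∧ tsupport u ⊆ Ω

/-- `u` is a weak solution of `-Δu - ∇·(W₁u) + W₂·∇u + Vu = 0` in `Ω`. -/
def IsWeakSol (Ω : Set V2) (W₁ W₂ : V2 → V2) (V u : V2 → ℝ) : Prop :=
  ∀ v, H10c Ω v →
    (∫ x in Ω, ⟪gradient u x, gradient v x⟫)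
      + (∫ x in Ω, u x * ⟪W₁ x, gradient v x⟫)
      + (∫ x in Ω, ⟪W₂ x, gradient u x⟫ * v x)
      + (∫ x in Ω, V x * u x * v x) = 0

section Helpers
open Filter Topology Set
open scoped Convolution

lemma measurable_gradient2 (u : V2 → ℝ) : Measurable (gradient u) := by
  unfold gradient
  exact (InnerProductSpace.toDual ℝ V2).symm.continuous.measurable.comp (measurable_fderiv ℝ u)

lemma inner_grad (u : V2 → ℝ) (y a : V2) : ⟪gradient u y, a⟫ = fderiv ℝ u y a := by
  rw [← toDual_gradient]; simp

lemma transl_mp (h : V2) : MeasurePreserving (fun y : V2 => y - h) volume volume :=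
  measurePreserving_sub_right volume h

lemma transl_cont {E : Type*} [NormedAddCommGroup E] [InnerProductSpace ℝ E]
    (P F : V2 → E) (hP : MemLp P 2) (hF : MemLp F 2) :
    Continuous fun h : V2 => ∫ y, ⟪P y, F (y - h)⟫ := by
  let g : V2 → C(V2, V2) := fun h => ⟨fun y => y - h, by fun_prop⟩
  have hg : Continuous g := by
    have : Continuous (Function.uncurry fun (h y : V2) => y - h) := by
      unfold Function.uncurry; fun_prop
    exact ContinuousMap.continuous_of_continuous_uncurry g this
  have h1 : Continuous (fun h => Lp.compMeasurePreserving (g h) (transl_mp h) (hF.toLp F)) :=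
    (continuous_const (y := hF.toLp F)).compMeasurePreservingLp hg (fun h => transl_mp h) (by simp)
  have h2 : Continuous (fun h =>
      ⟪hP.toLp P, Lp.compMeasurePreserving (g h) (transl_mp h) (hF.toLp F)⟫) :=
    continuous_const.inner h1
  refine h2.congr fun h => ?_
  rw [L2.inner_def]
  refine integral_congr_ae ?_
  have e1 := hP.coeFn_toLp
  have e2 := Lp.coeFn_compMeasurePreserving (hF.toLp F) (transl_mp h)
  have e3 := (transl_mp h).quasiMeasurePreserving.ae_eq_comp hF.coeFn_toLp
  filter_upwards [e1, e2, e3] with y a1 a2 a3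
  have : (Lp.compMeasurePreserving (g h) (transl_mp h) (hF.toLp F)) y = F (y - h) := by
    refine a2.trans a3
  rw [a1, this]

lemma fubini_conv {E : Type*} [NormedAddCommGroup E] [InnerProductSpace ℝ E] [CompleteSpace E]
    (P F : V2 → E) (hP : MemLp P 2) (hF : MemLp F 2) (φ : V2 → ℝ) (hφ : Continuous φ)
    (hφc : HasCompactSupport φ) :
    ∫ y, ⟪P y, ∫ t, φ t • F (y - t)⟫ = ∫ t, φ t * ∫ y, ⟪P y, F (y - t)⟫ := by
  have hφi : Integrable φ := hφ.integrable_of_hasCompactSupport hφc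
  have hFloc : LocallyIntegrable F :=  hF.locallyIntegrable (by norm_num)
  have hitg : Integrable (fun p : V2 × V2 => φ p.2 * ⟪P p.1, F (p.1 - p.2)⟫)
      (volume.prod volume) := by
    have i1 : Integrable (fun p : V2 × V2 => ‖P p.1‖^2 * |φ p.2|) (volume.prod volume) :=
      (hP.integrable_norm_pow (by norm_num)).mul_prod hφi.abs
    have i2 : Integrable (fun p : V2 × V2 => |φ p.2| * ‖F (p.1 - p.2)‖^2) (volume.prod volume) := by
      have := Integrable.convolution_integrand (ContinuousLinearMap.mul ℝ ℝ) hφi.abs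
        (hF.integrable_norm_pow (by norm_num)) (μ := (volume : Measure V2))
        (ν := (volume : Measure V2))
      simpa using this
    have m1 : AEStronglyMeasurable (fun p : V2 × V2 => φ p.2 • F (p.1 - p.2))
        (volume.prod volume) := by
      have := AEStronglyMeasurable.convolution_integrand (ContinuousLinearMap.lsmul ℝ ℝ)
        hφi.aestronglyMeasurable hF.aestronglyMeasurable (μ := (volume : Measure V2))
        (ν := (volume : Measure V2))
      simpa using this
    have m2 : AEStronglyMeasurable (fun p : V2 × V2 => ⟪P p.1, φ p.2 • F (p.1 - p.2)⟫)
        (volume.prod volume) := (hP.aestronglyMeasurable.comp_fst).inner m1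
    refine (i1.add i2).mono ?_ ?_
    · refine m2.congr (Eventually.of_forall fun p => ?_)
      simp [inner_smul_right]
    · refine Eventually.of_forall fun p => ?_
      simp only [Pi.add_apply, norm_mul, Real.norm_eq_abs]
      rw [abs_of_nonneg (a := _ + _) (by positivity)]
      have := abs_real_inner_le_norm (P p.1) (F (p.1 - p.2))
      have h2 := two_mul_le_add_sq (‖P p.1‖) ‖F (p.1 - p.2)‖
      have : |⟪P p.1, F (p.1 - p.2)⟫| ≤ ‖P p.1‖^2 + ‖F (p.1-p.2)‖^2 := by
        nlinarith [sq_nonneg (‖P p.1‖), sq_nonneg ‖F (p.1-p.2)‖]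
      nlinarith [mul_le_mul_of_nonneg_left this (abs_nonneg (φ p.2))]
  have e1 : ∀ y, ⟪P y, ∫ t, φ t • F (y - t)⟫ = ∫ t, φ t * ⟪P y, F (y - t)⟫ := by
    intro y
    have hi : Integrable fun t => φ t • F (y - t) := by
      have := hφc.convolutionExists_left (ContinuousLinearMap.lsmul ℝ ℝ) hφ hFloc y
      exact this
    rw [← integral_inner hi]
    simp [inner_smul_right]
  simp_rw [e1]
  rw [integral_integral_swap hitg]
  simp_rw [integral_const_mul]

lemma grad_conv (v : V2 → ℝ) (hv : Differentiable ℝ v) (hvc : HasCompactSupport v)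
    (hv2 : MemLp (gradient v) 2) (φ : V2 → ℝ) (hφ : ContDiff ℝ 1 φ)
    (hφc : HasCompactSupport φ) (y : V2) :
    gradient (fun y => ∫ t, φ t * v (y - t)) y = ∫ t, φ t • gradient v (y - t) := by
  have hvL : LocallyIntegrable v := hv.continuous.locallyIntegrable
  have hgL : LocallyIntegrable (gradient v) := hv2.locallyIntegrable (by norm_num)
  have h0 := hφc.hasFDerivAt_convolution_left (ContinuousLinearMap.mul ℝ ℝ) hφ hvL y
  have h1 : (fun y => ∫ t, φ t * v (y - t)) = (φ ⋆[ContinuousLinearMap.mul ℝ ℝ] v) := by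
    ext z; simp [convolution_def]
  have hi : Integrable fun t => φ t • gradient v (y - t) :=
    hφc.convolutionExists_left (ContinuousLinearMap.lsmul ℝ ℝ) hφ.continuous hgL y
  refine ext_inner_right ℝ fun a => ?_
  rw [inner_grad, h1, h0.fderiv, real_inner_comm, ← integral_inner hi]
  have h2 : (fderiv ℝ φ ⋆[(ContinuousLinearMap.mul ℝ ℝ).precompL V2] v) y a
      = ∫ t, fderiv ℝ φ t a * v (y - t) := by
    rw [convolution_def, ContinuousLinearMap.integral_apply]
    · simp [ContinuousLinearMap.precompL_apply]
    · exact (hφc.fderiv ℝ).convolutionExists_left _ (hφ.continuous_fderiv (by norm_num)) hvL y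
  rw [h2]
  have hd : ∀ t, HasFDerivAt (fun t => v (y - t)) (-(fderiv ℝ v (y - t))) t := by
    intro t
    have := (hv (y - t)).hasFDerivAt.comp t ((hasFDerivAt_id t).const_sub y)
    simpa using! this
  have h3 := integral_bilinear_hasFDerivAt_right_eq_neg_left_of_integrable (μ := volume)
    (f := φ) (f' := fderiv ℝ φ) (g := fun t => v (y - t)) (g' := fun t => -(fderiv ℝ v (y - t)))
    (v := a) (B := ContinuousLinearMap.mul ℝ ℝ) ?_ ?_ ?_ ?_ ?_
  · simp only [ContinuousLinearMap.mul_apply', ContinuousLinearMap.neg_apply, mul_neg,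
      integral_neg, neg_inj] at h3
    rw [← h3]
    congr 1; ext t
    rw [inner_smul_right, real_inner_comm, inner_grad]
  · refine Continuous.integrable_of_hasCompactSupport ?_ ?_
    · have := hφ.continuous_fderiv (by norm_num)
      have := hv.continuous
      simp only [ContinuousLinearMap.mul_apply']
      fun_prop
    · simp only [ContinuousLinearMap.mul_apply']
      exact HasCompactSupport.mul_right (hφc.fderiv_apply ℝ a)
  · simp only [ContinuousLinearMap.mul_apply', ContinuousLinearMap.neg_apply, mul_neg]
    refine Integrable.neg ?_
    refine (hi.const_inner a).congr (Eventually.of_forall fun t => ?_)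
    simp only
    rw [inner_smul_right, real_inner_comm, inner_grad]
  · refine Continuous.integrable_of_hasCompactSupport ?_ ?_
    · have := hφ.continuous
      have := hv.continuous
      simp only [ContinuousLinearMap.mul_apply']
      fun_prop
    · simp only [ContinuousLinearMap.mul_apply']
      exact HasCompactSupport.mul_right hφc
  · intro t _; exact (hφ.differentiable (by norm_num) t).hasFDerivAt
  · intro t _; exact hd t


lemma memLp_inner_integrable {E : Type*} [NormedAddCommGroup E] [InnerProductSpace ℝ E]
    {P F : V2 → E} (hP : MemLp P 2) (hF : MemLp F 2) :
    Integrable (fun y => ⟪P y, F y⟫) := by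
  refine ((hP.integrable_norm_pow (by norm_num)).add
    (hF.integrable_norm_pow (by norm_num))).mono
    (hP.aestronglyMeasurable.inner hF.aestronglyMeasurable) (Eventually.of_forall fun y => ?_)
  have h1 := norm_inner_le_norm (𝕜 := ℝ) (P y) (F y)
  have h2 := two_mul_le_add_sq (‖P y‖) ‖F y‖
  simp only [Pi.add_apply, Nat.reduceAdd]
  rw [Real.norm_of_nonneg (r := _ + _) (by positivity)]
  nlinarith [sq_nonneg (‖P y‖), sq_nonneg ‖F y‖]

lemma grad_zero_off (v : V2 → ℝ) {y : V2} (hy : y ∉ tsupport v) : gradient v y = 0 := by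
  have : fderiv ℝ v y = 0 := by
    by_contra h
    exact hy (support_fderiv_subset ℝ (f := v) h)
  rw [gradient, this, map_zero]

lemma ext_test (G : Set V2) (hG : IsOpen G) (P : V2 → V2) (c : V2 → ℝ)
    (hP : ∀ K, IsCompact K → K ⊆ G → MemLp P 2 (volume.restrict K))
    (hc : ∀ K, IsCompact K → K ⊆ G → MemLp c 2 (volume.restrict K))
    (heq : ∀ v, H10c G v → ∫ y, (⟪P y, gradient v y⟫ + c y * v y) = 0)
    (v : V2 → ℝ) (hv : Differentiable ℝ v) (hvc : HasCompactSupport v) (hvG : tsupport v ⊆ G)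
    (hv2 : MemLp (gradient v) 2) :
    Integrable (fun y => ⟪P y, gradient v y⟫ + c y * v y) ∧
      ∫ y, (⟪P y, gradient v y⟫ + c y * v y) = 0 := by
  obtain ⟨δ, hδ, hδG⟩ := (hvc.isCompact).exists_cthickening_subset_open hG hvG
  set K := cthickening δ (tsupport v) with hK
  have hKc : IsCompact K := hvc.isCompact.cthickening
  have hSK : tsupport v ⊆ K := self_subset_cthickening _
  have hPK : MemLp (K.indicator P) 2 := by
    rw [memLp_indicator_iff_restrict hKc.measurableSet]; exact hP K hKc hδG
  have hcK : MemLp (K.indicator c) 2 := by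
    rw [memLp_indicator_iff_restrict hKc.measurableSet]; exact hc K hKc hδG
  have hvL : MemLp v 2 := hv.continuous.memLp_of_hasCompactSupport hvc
  -- general replacement
  have repl : ∀ w : V2 → ℝ, tsupport w ⊆ K → (fun y => ⟪P y, gradient w y⟫ + c y * w y)
      = fun y => ⟪K.indicator P y, gradient w y⟫ + ⟪K.indicator c y, w y⟫ := by
    intro w hw
    ext y
    by_cases hy : y ∈ K
    · simp [hy, mul_comm]
    · have : w y = 0 := image_eq_zero_of_notMem_tsupport fun h => hy (hw h)
      simp [this, grad_zero_off w fun h => hy (hw h)]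
  have split : ∀ w : V2 → ℝ, tsupport w ⊆ K → MemLp (gradient w) 2 → MemLp w 2 →
      Integrable (fun y => ⟪P y, gradient w y⟫ + c y * w y) ∧
      ∫ y, (⟪P y, gradient w y⟫ + c y * w y) =
        (∫ y, ⟪K.indicator P y, gradient w y⟫) + ∫ y, ⟪K.indicator c y, w y⟫ := by
    intro w hw h1 h2
    rw [repl w hw]
    have i1 := memLp_inner_integrable hPK h1
    have i2 := memLp_inner_integrable hcK h2
    exact ⟨i1.add i2, integral_add i1 i2⟩
  obtain ⟨hitg, hval⟩ := split v hSK hv2 hvL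
  refine ⟨hitg, ?_⟩
  rw [hval]
  set e1 : V2 → ℝ := fun t => ∫ y, ⟪K.indicator P y, gradient v (y - t)⟫ with he1
  set e2 : V2 → ℝ := fun t => ∫ y, ⟪K.indicator c y, v (y - t)⟫ with he2
  have c1 : Continuous e1 := transl_cont _ _ hPK hv2
  have c2 : Continuous e2 := transl_cont _ _ hcK hvL
  set g : V2 → ℝ := fun t => e1 (-t) + e2 (-t) with hg
  have cg : Continuous g := by fun_prop
  have hg0 : g 0 = (∫ y, ⟪K.indicator P y, gradient v y⟫) + ∫ y, ⟪K.indicator c y, v y⟫ := by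
    simp [hg, he1, he2]
  rw [← hg0]
  let φ : ℕ → ContDiffBump (0 : V2) := fun n =>
    ⟨δ / (2 * (n + 2)), δ / (n + 2), by positivity, by
      apply div_lt_div_of_pos_left hδ (by positivity)
      have : (0:ℝ) ≤ n := Nat.cast_nonneg n
      linarith⟩
  have hφ0 : Tendsto (fun n => (φ n).rOut) atTop (𝓝 0) := by
    have : Tendsto (fun n : ℕ => (n : ℝ) + 2) atTop atTop :=
      tendsto_atTop_add_const_right _ _ tendsto_natCast_atTop_atTop
    exact Tendsto.div_atTop tendsto_const_nhds this
  have hφδ : ∀ n, (φ n).rOut < δ := by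
    intro n
    change δ / (n + 2) < δ
    have : (0:ℝ) ≤ n := Nat.cast_nonneg n
    rw [div_lt_iff₀ (by positivity)]
    nlinarith
  have hlim := ContDiffBump.convolution_tendsto_right_of_continuous (μ := volume) hφ0 cg 0
  have hz : ∀ n, ((φ n).normed volume ⋆[ContinuousLinearMap.lsmul ℝ ℝ, volume] g) 0 = 0 := by
    intro n
    set ψ := (φ n).normed volume with hψ
    have ψsm : ContDiff ℝ (⊤ : ℕ∞) ψ := (φ n).contDiff_normed
    have ψc : HasCompactSupport ψ := (φ n).hasCompactSupport_normed
    have ψi : Integrable ψ := ψsm.continuous.integrable_of_hasCompactSupport ψc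
    let w : V2 → ℝ := fun y => ∫ t, ψ t * v (y - t)
    have hw : w = (ψ ⋆[ContinuousLinearMap.mul ℝ ℝ] v) := by
      ext z; simp [w, convolution_def]
    have hws : ContDiff ℝ (⊤ : ℕ∞) w := by
      rw [hw]; exact ψc.contDiff_convolution_left _ ψsm hv.continuous.locallyIntegrable
    have hwK : tsupport w ⊆ K := by
      refine closure_minimal ?_ isClosed_cthickening
      rw [hw]
      refine (support_convolution_subset _).trans ?_
      rintro _ ⟨a, ha, b, hb, rfl⟩
      refine mem_cthickening_of_dist_le (a + b) b δ _ (subset_tsupport _ hb) ?_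
      rw [(φ n).support_normed_eq] at ha
      have : ‖a‖ < (φ n).rOut := by simpa using ha
      simp only [dist_eq_norm, add_sub_cancel_right]
      exact this.le.trans (hφδ n).le
    have hwc : HasCompactSupport w := HasCompactSupport.of_support_subset_isCompact hKc
      ((subset_tsupport _).trans hwK)
    have hgw : gradient w = fun y => ∫ t, ψ t • gradient v (y - t) := by
      ext1 y
      exact grad_conv v hv hvc hv2 ψ (ψsm.of_le (by simp)) ψc y
    have hgwL : MemLp (gradient w) 2 := by
      refine Continuous.memLp_of_hasCompactSupport ?_ ?_
      · have := hws.continuous_fderiv (by simp)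
        unfold gradient
        exact (InnerProductSpace.toDual ℝ V2).symm.continuous.comp this
      · refine HasCompactSupport.of_support_subset_isCompact hKc fun y hy => ?_
        by_contra h
        exact hy (grad_zero_off w fun h' => h (hwK h'))
    have hwL : MemLp w 2 := hws.continuous.memLp_of_hasCompactSupport hwc
    have h0 := heq w ⟨hws, hwc, hwK.trans hδG⟩
    rw [(split w hwK hgwL hwL).2, hgw] at h0
    have f1 := fubini_conv _ _ hPK hv2 ψ ψsm.continuous ψc
    have f2 := fubini_conv _ _ hcK hvL ψ ψsm.continuous ψc
    have f2' : (∫ y, ⟪K.indicator c y, w y⟫) = ∫ t, ψ t * e2 t := by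
      rw [he2, ← f2]; rfl
    rw [f1, f2'] at h0
    rw [convolution_def]
    simp only [hg, ContinuousLinearMap.lsmul_apply, zero_sub, neg_neg, smul_eq_mul, mul_add]
    rw [integral_add]
    · exact h0
    · exact Continuous.integrable_of_hasCompactSupport (ψsm.continuous.mul c1) ψc.mul_right
    · exact Continuous.integrable_of_hasCompactSupport (ψsm.continuous.mul c2) ψc.mul_right
  simp only [hz] at hlim
  exact (tendsto_nhds_unique hlim tendsto_const_nhds)


lemma generic {T : Type*} [AddCommGroup T] [Module ℝ T] (t : Fin 4 → T →ₗ[ℝ] (V2 → ℝ))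
    (μ : Measure V2) (heq : ∀ v, ∑ j, ∫ y, t j v y ∂μ = 0) :
    ∃ s : Fin 4 → ℝ, (∀ j, (∀ v, Integrable (t j v) μ) → s j = 1) ∧
      (∀ j, s j = 0 ∨ (s j = 1 ∧ ∀ v, Integrable (t j v) μ)) ∧
      ∀ v, ∑ j, s j * ∫ y, t j v y ∂μ = 0 := by
  classical
  let A : Fin 4 → Submodule ℝ T := fun j =>
    { carrier := {v | Integrable (t j v) μ}
      add_mem' := by
        intro a b ha hb
        simp only [mem_ofPred_eq, map_add] at *
        exact ha.add hb
      zero_mem' := by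
        simp only [mem_ofPred_eq, map_zero]
        exact integrable_zero _ _ _
      smul_mem' := by
        intro r a ha
        simp only [mem_ofPred_eq, map_smul] at *
        exact ha.smul r }
  have hA : ∀ j v, v ∈ A j ↔ Integrable (t j v) μ := fun j v => Iff.rfl
  let s : Fin 4 → ℝ := fun j => if A j = ⊤ then 1 else 0
  have hs : ∀ j, s j = 0 ∨ (s j = 1 ∧ ∀ v, Integrable (t j v) μ) := by
    intro j
    by_cases h : A j = ⊤
    · right
      refine ⟨by simp [s, h], fun v => ?_⟩
      rw [← hA, h]; trivial
    · left; simp [s, h]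
  refine ⟨s, ?_, hs, ?_⟩
  · intro j hj
    have : A j = ⊤ := by
      ext v; simp [hA, hj v]
    simp [s, this]
  let Q : Submodule ℝ T :=
    { carrier := {v | ∑ j, s j * ∫ y, t j v y ∂μ = 0}
      add_mem' := by
        intro a b ha hb
        simp only [mem_ofPred_eq] at *
        rw [← add_zero (0:ℝ)]
        nth_rw 1 [← ha]
        nth_rw 1 [← hb]
        rw [← Finset.sum_add_distrib]
        refine Finset.sum_congr rfl fun j _ => ?_
        rcases hs j with h | ⟨h, hi⟩
        · simp [h]
        · rw [h, map_add, ← mul_add, ← integral_add (hi a) (hi b)]; rfl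
      zero_mem' := by simp
      smul_mem' := by
        intro r a ha
        simp only [mem_ofPred_eq] at *
        rw [← mul_zero r, ← ha, Finset.mul_sum]
        refine Finset.sum_congr rfl fun j _ => ?_
        simp only [map_smul, Pi.smul_apply, smul_eq_mul]
        rw [integral_const_mul]; ring }
  have hQ : ∀ v, v ∈ Q ↔ ∑ j, s j * ∫ y, t j v y ∂μ = 0 := fun v => Iff.rfl
  let p : Option {j // A j ≠ ⊤} → Subspace ℝ T := fun o => o.elim Q fun j => A j.1
  have hun : ⋃ o, (p o : Set T) = univ := by
    refine eq_univ_of_forall fun v => ?_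
    by_cases h : ∃ j, A j ≠ ⊤ ∧ v ∈ A j
    · obtain ⟨j, hj, hv⟩ := h
      exact mem_iUnion.2 ⟨some ⟨j, hj⟩, hv⟩
    · push Not at h
      refine mem_iUnion.2 ⟨none, ?_⟩
      change v ∈ Q
      rw [hQ, ← heq v]
      refine Finset.sum_congr rfl fun j _ => ?_
      by_cases hj : A j = ⊤
      · simp [s, hj]
      · have := h j hj
        rw [hA] at this
        rw [integral_undef this]; simp
  obtain ⟨o, ho⟩ := Subspace.exists_eq_top_of_iUnion_eq_univ (p := p) hun
  rcases o with _ | j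
  · intro v
    have : v ∈ p none := by rw [ho]; trivial
    exact this
  · exact absurd ho j.2

lemma exists_cutoff (G K : Set V2) (hG : IsOpen G) (hK : IsCompact K) (hKG : K ⊆ G) :
    ∃ χ : V2 → ℝ, H10c G χ ∧ ∀ y ∈ K, χ =ᶠ[𝓝 y] 1 := by
  obtain ⟨δ, hδ, hδG⟩ := hK.exists_cthickening_subset_open hG hKG
  have h1 : K ⊆ interior (cthickening δ K) :=
    (self_subset_thickening hδ K).trans
      (interior_maximal (thickening_subset_cthickening δ K) isOpen_thickening)
  obtain ⟨f, hf1, hf2, -⟩ := exists_contMDiffMap_one_nhds_of_subset_interior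
    (modelWithCornersSelf ℝ V2) (n := (⊤:ℕ∞)) hK.isClosed h1
  have hsup : Function.support f ⊆ cthickening δ K := by
    intro y hy; by_contra h; exact hy (hf2 y h)
  refine ⟨f, ⟨f.contMDiff.contDiff, ?_, ?_⟩, ?_⟩
  · exact HasCompactSupport.of_support_subset_isCompact hK.cthickening hsup
  · exact (closure_minimal hsup isClosed_cthickening).trans hδG
  · intro y hy
    exact (eventually_nhdsSet_iff_forall.1 hf1) y hy


def testSpace (G : Set V2) : Submodule ℝ (V2 → ℝ) where
  carrier := {v | H10c G v}
  add_mem' := by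
    rintro a b ⟨h1, h2, h3⟩ ⟨g1, g2, g3⟩
    exact ⟨h1.add g1, h2.add g2, (tsupport_add a b).trans (union_subset h3 g3)⟩
  zero_mem' := ⟨contDiff_const, HasCompactSupport.zero, by simp [tsupport]⟩
  smul_mem' := by
    rintro r a ⟨h1, h2, h3⟩
    refine ⟨contDiff_const.smul h1, h2.smul_left (f := fun _ => r), ?_⟩
    exact (tsupport_smul_subset_right (fun _ => r) a).trans h3

lemma testSpace_diff {G : Set V2} (v : testSpace G) : Differentiable ℝ v.1 :=
  v.2.1.differentiable (by simp)

def gradLin (G : Set V2) : testSpace G →ₗ[ℝ] (V2 → V2) where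
  toFun v := gradient v.1
  map_add' v w := by
    ext1 y
    simp only [gradient, Submodule.coe_add, Pi.add_apply]
    rw [fderiv_add (testSpace_diff v y) (testSpace_diff w y), map_add]
  map_smul' r v := by
    ext1 y
    simp only [gradient, Submodule.coe_smul, Pi.smul_apply, RingHom.id_apply]
    rw [fderiv_const_smul (testSpace_diff v y)]
    simp

def tTerm (G : Set V2) (W₁ W₂ : V2 → V2) (V u : V2 → ℝ) :
    Fin 4 → testSpace G →ₗ[ℝ] (V2 → ℝ) := ![
  { toFun := fun v y => ⟪gradient u y, gradLin G v y⟫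
    map_add' := by intro v w; ext y; simp [inner_add_right]
    map_smul' := by intro r v; ext y; simp [inner_smul_right] },
  { toFun := fun v y => u y * ⟪W₁ y, gradLin G v y⟫
    map_add' := by intro v w; ext y; simp [inner_add_right, mul_add]
    map_smul' := by intro r v; ext y; simp [inner_smul_right]; ring },
  { toFun := fun v y => ⟪W₂ y, gradient u y⟫ * v.1 y
    map_add' := by intro v w; ext y; simp [mul_add]
    map_smul' := by intro r v; ext y; simp; ring },
  { toFun := fun v y => V y * u y * v.1 y
    map_add' := by intro v w; ext y; simp [mul_add]
    map_smul' := by intro r v; ext y; simp; ring }]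

lemma selection (B G : Set V2) (hB : IsOpen B) (hG : IsOpen G) (hGB : G ⊆ B)
    (W₁ W₂ : V2 → V2) (V u : V2 → ℝ) (M₁ M₂ MV : ℝ)
    (hM₁ : 0 ≤ M₁) (hM₂ : 0 ≤ M₂) (hMV : 0 ≤ MV)
    (hW₁ : ∀ y ∈ B, ‖W₁ y‖ ≤ M₁) (hW₂ : ∀ y ∈ B, ‖W₂ y‖ ≤ M₂) (hV : ∀ y ∈ B, |V y| ≤ MV)
    (hloc : ∀ K, IsCompact K → K ⊆ G → MemLp (gradient u) 2 (volume.restrict K))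
    (hw : IsWeakSol B W₁ W₂ V u) :
    ∃ (b : V2 → V2) (c : V2 → ℝ), (∀ y ∈ B, ‖b y‖ ≤ M₁ * |u y|) ∧
      (∀ y ∈ B, |c y| ≤ M₂ * ‖gradient u y‖ + MV * |u y|) ∧
      (∀ K, IsCompact K → K ⊆ G → AEStronglyMeasurable b (volume.restrict K)) ∧
      (∀ K, IsCompact K → K ⊆ G → AEStronglyMeasurable c (volume.restrict K)) ∧
      ∀ v, H10c G v → ∫ y, (⟪gradient u y + b y, gradient v y⟫ + c y * v y) = 0 := by
  obtain ⟨s, hs1, hs2, hs3⟩ := generic (tTerm G W₁ W₂ V u) (volume.restrict B) (by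
    intro v
    have := hw v.1 ⟨v.2.1, v.2.2.1, v.2.2.2.trans hGB⟩
    rw [Fin.sum_univ_four]
    exact this)
  have h0 : s 0 = 1 := by
    refine hs1 0 fun v => ?_
    have hKc := v.2.2.1.isCompact
    refine Integrable.integrableOn (f := fun y => ⟪gradient u y, gradient v.1 y⟫) ?_
    have hP : MemLp ((tsupport v.1).indicator (gradient u)) 2 := by
      rw [memLp_indicator_iff_restrict hKc.measurableSet]; exact hloc _ hKc v.2.2.2
    have hgv : MemLp (gradient v.1) 2 := by
      refine Continuous.memLp_of_hasCompactSupport ?_ ?_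
      · have := v.2.1.continuous_fderiv (by simp)
        unfold gradient
        exact (InnerProductSpace.toDual ℝ V2).symm.continuous.comp this
      · refine HasCompactSupport.of_support_subset_isCompact hKc fun y hy => ?_
        by_contra h
        exact hy (grad_zero_off v.1 h)
    refine (memLp_inner_integrable hP hgv).congr (Eventually.of_forall fun y => ?_)
    by_cases hy : y ∈ tsupport v.1
    · simp [hy]
    · simp [grad_zero_off v.1 hy]
  have hsb : ∀ j, 0 ≤ s j ∧ s j ≤ 1 := by
    intro j; rcases hs2 j with h | ⟨h, -⟩ <;> simp [h]
  refine ⟨fun y => s 1 • (u y • W₁ y), fun y => s 2 * ⟪W₂ y, gradient u y⟫ + s 3 * (V y * u y),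
    ?_, ?_, ?_, ?_, ?_⟩
  · intro y hy
    rw [norm_smul, norm_smul, Real.norm_eq_abs, Real.norm_eq_abs, abs_of_nonneg (hsb 1).1]
    have := hW₁ y hy
    calc s 1 * (|u y| * ‖W₁ y‖) ≤ 1 * (|u y| * M₁) := by
          gcongr
          exact (hsb 1).2
      _ = _ := by ring
  · intro y hy
    refine (abs_add_le _ _).trans ?_
    have i1 : |s 2 * ⟪W₂ y, gradient u y⟫| ≤ M₂ * ‖gradient u y‖ := by
      rw [abs_mul, abs_of_nonneg (hsb 2).1]
      calc _ ≤ 1 * (‖W₂ y‖ * ‖gradient u y‖) := by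
            gcongr
            · exact (hsb 2).2
            · exact abs_real_inner_le_norm _ _
        _ ≤ _ := by rw [one_mul]; gcongr; exact hW₂ y hy
    have i2 : |s 3 * (V y * u y)| ≤ MV * |u y| := by
      rw [abs_mul, abs_of_nonneg (hsb 3).1, abs_mul]
      calc _ ≤ 1 * (MV * |u y|) := by
            gcongr
            · exact (hsb 3).2
            · exact hV y hy
        _ = _ := one_mul _
    exact add_le_add i1 i2
  · intro K hK hKG
    rcases hs2 1 with h | ⟨h, hi⟩
    · simp only [h, zero_smul]; exact aestronglyMeasurable_const
    simp only [h, one_smul]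
    obtain ⟨χ, ⟨c1, c2, c3⟩, hχ1⟩ := exists_cutoff G K hG hK hKG
    have hcoord : ∀ i : Fin 2, AEStronglyMeasurable (fun y => u y * W₁ y i)
        (volume.restrict K) := by
      intro i
      let v : testSpace G := ⟨fun y => χ y * y i, c1.mul (by fun_prop), c2.mul_right,
        (tsupport_mul_subset_left).trans c3⟩
      have hv := (hi v).mono_measure (Measure.restrict_mono (hKG.trans hGB) le_rfl)
      refine hv.aestronglyMeasurable.congr ?_
      filter_upwards [ae_restrict_mem hK.measurableSet] with y hy
      change u y * ⟪W₁ y, gradient v.1 y⟫ = _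
      rw [real_inner_comm, inner_grad]
      have : v.1 =ᶠ[𝓝 y] (EuclideanSpace.proj i : V2 →L[ℝ] ℝ) := by
        filter_upwards [hχ1 y hy] with z hz
        simp [v, hz]
      rw [this.fderiv_eq, ContinuousLinearMap.fderiv]
      simp
    have : (fun y => u y • W₁ y) =
        fun y => ∑ i : Fin 2, (u y * W₁ y i) • (EuclideanSpace.single i (1:ℝ) : V2) := by
      ext y j
      fin_cases j <;> simp [Fin.sum_univ_two]
    rw [this]
    exact Finset.aestronglyMeasurable_fun_sum _ fun i _ => (hcoord i).smul_const _
  · intro K hK hKG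
    obtain ⟨χ, hχ, hχ1⟩ := exists_cutoff G K hG hK hKG
    let v : testSpace G := ⟨χ, hχ⟩
    refine AEStronglyMeasurable.add ?_ ?_
    · rcases hs2 2 with h | ⟨h, hi⟩
      · simp only [h, zero_mul]; exact aestronglyMeasurable_const
      simp only [h, one_mul]
      have hv := (hi v).mono_measure (Measure.restrict_mono (hKG.trans hGB) le_rfl)
      refine hv.aestronglyMeasurable.congr ?_
      filter_upwards [ae_restrict_mem hK.measurableSet] with y hy
      change ⟪W₂ y, gradient u y⟫ * χ y = _
      simp [(hχ1 y hy).eq_of_nhds]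
    · rcases hs2 3 with h | ⟨h, hi⟩
      · simp only [h, zero_mul]; exact aestronglyMeasurable_const
      simp only [h, one_mul]
      have hv := (hi v).mono_measure (Measure.restrict_mono (hKG.trans hGB) le_rfl)
      refine hv.aestronglyMeasurable.congr ?_
      filter_upwards [ae_restrict_mem hK.measurableSet] with y hy
      change V y * u y * χ y = _
      simp [(hχ1 y hy).eq_of_nhds]
  · intro v hv
    have h := hs3 ⟨v, hv⟩
    have hI : ∀ j, Integrable (fun y => s j * tTerm G W₁ W₂ V u j ⟨v, hv⟩ y)
        (volume.restrict B) := by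
      intro j
      rcases hs2 j with h | ⟨h, hi⟩
      · simp [h]
      · simpa [h] using hi ⟨v, hv⟩
    simp only [← integral_const_mul] at h
    rw [← integral_finsetSum _ fun j _ => hI j] at h
    rw [← setIntegral_eq_integral_of_forall_compl_eq_zero (s := B), ← h]
    · congr 1
      ext y
      rw [Fin.sum_univ_four, h0]
      change _ = 1 * ⟪gradient u y, gradient v y⟫ + s 1 * (u y * ⟪W₁ y, gradient v y⟫)
        + s 2 * (⟪W₂ y, gradient u y⟫ * v y) + s 3 * (V y * u y * v y)
      rw [inner_add_left, inner_smul_left, inner_smul_left]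
      simp
      ring
    · intro y hy
      have hyv : y ∉ tsupport v := fun h => hy (hGB (hv.2.2 h))
      simp [grad_zero_off v hyv, image_eq_zero_of_notMem_tsupport hyv]


lemma test_all (B G : Set V2) (hB : IsOpen B) (hG : IsOpen G) (hGB : G ⊆ B)
    (W₁ W₂ : V2 → V2) (V u : V2 → ℝ) (M₁ M₂ MV : ℝ)
    (hM₁ : 0 ≤ M₁) (hM₂ : 0 ≤ M₂) (hMV : 0 ≤ MV)
    (hW₁ : ∀ y ∈ B, ‖W₁ y‖ ≤ M₁) (hW₂ : ∀ y ∈ B, ‖W₂ y‖ ≤ M₂) (hV : ∀ y ∈ B, |V y| ≤ MV)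
    (hu : ContinuousOn u B)
    (hloc : ∀ K, IsCompact K → K ⊆ G → MemLp (gradient u) 2 (volume.restrict K))
    (hw : IsWeakSol B W₁ W₂ V u) :
    ∃ (b : V2 → V2) (c : V2 → ℝ), (∀ y ∈ B, ‖b y‖ ≤ M₁ * |u y|) ∧
      (∀ y ∈ B, |c y| ≤ M₂ * ‖gradient u y‖ + MV * |u y|) ∧
      ∀ v, Differentiable ℝ v → HasCompactSupport v → tsupport v ⊆ G →
        MemLp (gradient v) 2 →
        Integrable (fun y => ⟪gradient u y + b y, gradient v y⟫ + c y * v y) ∧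
        ∫ y, (⟪gradient u y + b y, gradient v y⟫ + c y * v y) = 0 := by
  obtain ⟨b, c, hb, hc, hbm, hcm, heq⟩ := selection B G hB hG hGB W₁ W₂ V u M₁ M₂ MV hM₁ hM₂ hMV
    hW₁ hW₂ hV hloc hw
  refine ⟨b, c, hb, hc, fun v h1 h2 h3 h4 => ?_⟩
  refine ext_test G hG (fun y => gradient u y + b y) c ?_ ?_ heq v h1 h2 h3 h4
  · intro K hK hKG
    obtain ⟨C, hC⟩ := hK.exists_bound_of_continuousOn (hu.mono (hKG.trans hGB))
    have : IsFiniteMeasure (volume.restrict K) := ⟨by simpa using hK.measure_lt_top⟩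
    refine (hloc K hK hKG).add ?_
    refine MemLp.of_bound (hbm K hK hKG) (M₁ * C) ?_
    filter_upwards [ae_restrict_mem hK.measurableSet] with y hy
    refine (hb y (hGB (hKG hy))).trans ?_
    gcongr
    exact hC y hy
  · intro K hK hKG
    obtain ⟨C, hC⟩ := hK.exists_bound_of_continuousOn (hu.mono (hKG.trans hGB))
    have : IsFiniteMeasure (volume.restrict K) := ⟨by simpa using hK.measure_lt_top⟩
    have hm : MemLp (fun y => M₂ * ‖gradient u y‖ + MV * C) 2 (volume.restrict K) :=
      ((hloc K hK hKG).norm.const_mul M₂).add (memLp_const (MV * C))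
    refine hm.mono (hcm K hK hKG) ?_
    filter_upwards [ae_restrict_mem hK.measurableSet] with y hy
    refine (hc y (hGB (hKG hy))).trans (le_trans ?_ (le_abs_self _))
    gcongr
    exact hC y hy

/-- mollification of a Lipschitz function -/
lemma mollify (f : V2 → ℝ) (K : NNReal) (hf : LipschitzWith K f) (κ : ℝ) (hκ : 0 < κ) :
    ∃ g : V2 → ℝ, ContDiff ℝ (⊤ : ℕ∞) g ∧ LipschitzWith K g ∧ (∀ y, |g y - f y| ≤ K * κ) ∧
      (∀ y, (∀ z ∈ ball y κ, f z = f y) → g y = f y) := by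
  let φ : ContDiffBump (0 : V2) := ⟨κ / 2, κ, by positivity, by linarith⟩
  set g : V2 → ℝ := (φ.normed volume ⋆[ContinuousLinearMap.lsmul ℝ ℝ, volume] f) with hg
  have hfl : LocallyIntegrable f := hf.continuous.locallyIntegrable
  have hgd : ∀ y, g y = ∫ t, φ.normed volume t * f (y - t) := by
    intro y; simp [hg, convolution_def]
  have hitg : ∀ y, Integrable (fun t => φ.normed volume t * f (y - t)) := by
    intro y
    refine Continuous.integrable_of_hasCompactSupport ?_ ?_
    · exact (φ.contDiff_normed (n := 0)).continuous.mul
        (hf.continuous.comp (continuous_const.sub continuous_id))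
    · exact φ.hasCompactSupport_normed.mul_right
  refine ⟨g, ?_, ?_, ?_, ?_⟩
  · exact φ.hasCompactSupport_normed.contDiff_convolution_left _ φ.contDiff_normed hfl
  · refine LipschitzWith.of_dist_le_mul fun y z => ?_
    rw [Real.dist_eq, hgd, hgd, ← integral_sub (hitg y) (hitg z)]
    have hb : ∀ t, ‖φ.normed volume t * f (y - t) - φ.normed volume t * f (z - t)‖
        ≤ φ.normed volume t * (K * dist y z) := by
      intro t
      rw [← mul_sub, norm_mul, Real.norm_of_nonneg (φ.nonneg_normed t)]
      refine mul_le_mul_of_nonneg_left ?_ (φ.nonneg_normed t)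
      have := hf.dist_le_mul (y - t) (z - t)
      rwa [Real.dist_eq, dist_sub_right] at this
    have := norm_integral_le_of_norm_le (φ.integrable_normed.mul_const _)
      (Eventually.of_forall hb)
    rw [integral_mul_const, φ.integral_normed, one_mul] at this
    exact this
  · intro y
    have := ContDiffBump.dist_normed_convolution_le (φ := φ) (μ := volume) (x₀ := y) (g := f)
      (ε := K * κ) hf.continuous.aestronglyMeasurable (fun z hz => by
        refine (hf.dist_le_mul z y).trans ?_
        gcongr
        exact (mem_ball.1 hz).le)
    rwa [Real.dist_eq] at this
  · intro y hy
    exact ContDiffBump.normed_convolution_eq_right (φ := φ) (μ := volume) hy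


lemma pw_cacc (g b h w : V2) (ξ z cc Kc n U Z M₁ M₂ MV : ℝ) (hξ : |ξ| ≤ 2)
    (hh : ‖h‖ * |z| ≤ Kc) (hw : ‖w‖ ≤ n) (hb : ‖b‖ ≤ M₁ * U) (hU : 0 ≤ U)
    (hM₁ : 0 ≤ M₁) (hM₂ : 0 ≤ M₂) (hMV : 0 ≤ MV)
    (hc : |cc| ≤ M₂ * ‖g‖ + MV * U) (hz : |z| ≤ Z) :
    1 / 2 * (ξ ^ 2 * ‖g‖ ^ 2) - (1 / 2 * (2 * Kc + 2 * n + 2 * (M₁ * U) + 2 * M₂ * Z) ^ 2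
      + (4 * (M₁ * U) * Kc + 4 * (M₁ * U) * n + 4 * MV * U * Z))
    ≤ ⟪g + b, (2 * ξ * z) • h + (ξ ^ 2) • (g - w)⟫ + cc * (ξ ^ 2 * z) := by
  have e1 : ⟪g + b, (2 * ξ * z) • h + (ξ ^ 2) • (g - w)⟫ =
      2 * ξ * z * ⟪g, h⟫ + ξ ^ 2 * (‖g‖ ^ 2 - ⟪g, w⟫) + 2 * ξ * z * ⟪b, h⟫
        + ξ ^ 2 * (⟪b, g⟫ - ⟪b, w⟫) := by
    simp only [inner_add_left, inner_add_right, inner_smul_right, inner_sub_right,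
      real_inner_self_eq_norm_sq]
    ring
  set X := |ξ| * ‖g‖ with hX
  have hX0 : 0 ≤ X := by positivity
  have hξ0 := abs_nonneg ξ
  have hKc : 0 ≤ Kc := le_trans (by positivity) hh
  have hn : 0 ≤ n := le_trans (norm_nonneg _) hw
  have hZ : 0 ≤ Z := le_trans (abs_nonneg _) hz
  have hg0 := norm_nonneg g
  have hMU : 0 ≤ M₁ * U := by positivity
  have hsq : |ξ| ^ 2 = ξ ^ 2 := sq_abs ξ
  have hsq4 : |ξ| ^ 2 ≤ 4 := by nlinarith
  have t1 : |2 * ξ * z * ⟪g, h⟫| ≤ 2 * X * Kc := by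
    calc |2 * ξ * z * ⟪g, h⟫| = 2 * |ξ| * |z| * |⟪g, h⟫| := by simp [abs_mul]
      _ ≤ 2 * |ξ| * |z| * (‖g‖ * ‖h‖) := by gcongr; exact abs_real_inner_le_norm _ _
      _ = 2 * X * (‖h‖ * |z|) := by rw [hX]; ring
      _ ≤ _ := by gcongr
  have t2 : |ξ ^ 2 * ⟪g, w⟫| ≤ 2 * X * n := by
    calc |ξ ^ 2 * ⟪g, w⟫| = |ξ| * |ξ| * |⟪g, w⟫| := by rw [abs_mul, abs_pow]; ring
      _ ≤ |ξ| * 2 * (‖g‖ * n) := by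
        gcongr
        exact (abs_real_inner_le_norm _ _).trans (by gcongr)
      _ = _ := by rw [hX]; ring
  have t3 : |2 * ξ * z * ⟪b, h⟫| ≤ 4 * (M₁ * U) * Kc := by
    calc |2 * ξ * z * ⟪b, h⟫| = 2 * |ξ| * |z| * |⟪b, h⟫| := by simp [abs_mul]
      _ ≤ 2 * 2 * |z| * (M₁ * U * ‖h‖) := by
        gcongr
        exact (abs_real_inner_le_norm _ _).trans (by gcongr)
      _ = 4 * (M₁ * U) * (‖h‖ * |z|) := by ring
      _ ≤ _ := by gcongr
  have t4 : |ξ ^ 2 * ⟪b, g⟫| ≤ 2 * (M₁ * U) * X := by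
    calc |ξ ^ 2 * ⟪b, g⟫| = |ξ| * |ξ| * |⟪b, g⟫| := by rw [abs_mul, abs_pow]; ring
      _ ≤ |ξ| * 2 * (M₁ * U * ‖g‖) := by
        gcongr
        exact (abs_real_inner_le_norm _ _).trans (by gcongr)
      _ = _ := by rw [hX]; ring
  have t5 : |ξ ^ 2 * ⟪b, w⟫| ≤ 4 * (M₁ * U) * n := by
    calc |ξ ^ 2 * ⟪b, w⟫| = |ξ| ^ 2 * |⟪b, w⟫| := by rw [abs_mul, abs_pow]
      _ ≤ 4 * (M₁ * U * n) := by
        gcongr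
        exact (abs_real_inner_le_norm _ _).trans (by gcongr)
      _ = _ := by ring
  have t6 : |cc * (ξ ^ 2 * z)| ≤ 2 * M₂ * Z * X + 4 * MV * U * Z := by
    calc |cc * (ξ ^ 2 * z)| = |cc| * (|ξ| ^ 2 * |z|) := by simp [abs_mul]
      _ ≤ (M₂ * ‖g‖ + MV * U) * (|ξ| ^ 2 * Z) := by gcongr
      _ = M₂ * ‖g‖ * (|ξ| * |ξ|) * Z + MV * U * |ξ| ^ 2 * Z := by ring
      _ ≤ M₂ * ‖g‖ * (|ξ| * 2) * Z + MV * U * 4 * Z := by gcongr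
      _ = _ := by rw [hX]; ring
  have hX2 : X ^ 2 = ξ ^ 2 * ‖g‖ ^ 2 := by rw [hX, mul_pow, hsq]
  rw [e1, ← hX2]
  have q := sq_nonneg (X - (2 * Kc + 2 * n + 2 * (M₁ * U) + 2 * M₂ * Z))
  have a1 := (abs_le.1 t1).1
  have a2 := (abs_le.1 t2).2
  have a3 := (abs_le.1 t3).1
  have a4 := (abs_le.1 t4).1
  have a5 := (abs_le.1 t5).2
  have a6 := (abs_le.1 t6).1
  nlinarith

lemma norm_grad_le_of_lip {f : V2 → ℝ} {K : NNReal} (hf : LipschitzWith K f) (y : V2) :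
    ‖gradient f y‖ ≤ K := by
  rw [gradient, LinearIsometryEquiv.norm_map]
  exact norm_fderiv_le_of_lipschitz ℝ hf

lemma grad_mul {f g : V2 → ℝ} {y : V2} (hf : DifferentiableAt ℝ f y)
    (hg : DifferentiableAt ℝ g y) :
    gradient (fun y => f y * g y) y = f y • gradient g y + g y • gradient f y := by
  simp only [gradient]
  rw [fderiv_fun_mul hf hg, map_add]
  simp

lemma grad_sub {f g : V2 → ℝ} {y : V2} (hf : DifferentiableAt ℝ f y)
    (hg : DifferentiableAt ℝ g y) :
    gradient (fun y => f y - g y) y = gradient f y - gradient g y := by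
  simp only [gradient]
  rw [fderiv_fun_sub hf hg, map_sub]

lemma grad_eventuallyEq {f g : V2 → ℝ} {y : V2} (h : f =ᶠ[𝓝 y] g) :
    gradient f y = gradient g y := by
  simp only [gradient]; rw [h.fderiv_eq]

lemma smooth_grad_cont {f : V2 → ℝ} (h : ContDiff ℝ (⊤ : ℕ∞) f) : Continuous (gradient f) := by
  have := h.continuous_fderiv (by simp)
  unfold gradient
  exact (InnerProductSpace.toDual ℝ V2).symm.continuous.comp this

/-- cutoff vanishing near `A` -/
lemma cut_A (A : Set V2) (κ : ℝ) (hκ : 0 < κ) :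
    ∃ χ : V2 → ℝ, ContDiff ℝ (⊤ : ℕ∞) χ ∧ (∀ y, |χ y| ≤ 2) ∧
      (∀ y, infDist y A ≤ κ → χ y = 0) ∧ (∀ y, 4 * κ ≤ infDist y A → χ y = 1) ∧
      (∀ y, ‖gradient χ y‖ ≤ 1 / κ) ∧ (∀ y, 4 * κ < infDist y A → gradient χ y = 0) := by
  let f : V2 → ℝ := fun y => max 0 (min 1 (infDist y A / κ - 2))
  have hf : LipschitzWith (Real.toNNReal (1 / κ)) f := by
    have h1 : LipschitzWith (Real.toNNReal (1 / κ)) (fun y => infDist y A / κ - 2) := by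
      refine LipschitzWith.of_dist_le_mul fun y z => ?_
      have := (lipschitz_infDist_pt A).dist_le_mul y z
      rw [Real.dist_eq] at this ⊢
      rw [Real.coe_toNNReal _ (by positivity)]
      have e : infDist y A / κ - 2 - (infDist z A / κ - 2) =
        (infDist y A - infDist z A) / κ := by ring
      rw [e, abs_div, abs_of_pos hκ, div_eq_mul_one_div, mul_comm]
      gcongr
      simpa using this
    exact (h1.const_min 1).const_max 0
  have hf01 : ∀ y, 0 ≤ f y ∧ f y ≤ 1 := fun y =>
    ⟨le_max_left _ _, max_le zero_le_one (min_le_left _ _)⟩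
  obtain ⟨χ, c1, c2, c3, c4⟩ := mollify f _ hf κ hκ
  have hK : ((Real.toNNReal (1 / κ) : NNReal) : ℝ) = 1 / κ := Real.coe_toNNReal _ (by positivity)
  have hdist : ∀ y z, z ∈ ball y κ → |infDist z A - infDist y A| < κ := by
    intro y z hz
    have := (lipschitz_infDist_pt A).dist_le_mul z y
    rw [Real.dist_eq] at this
    simp only [NNReal.coe_one, one_mul] at this
    exact this.trans_lt hz
  have one : ∀ y, 4 * κ ≤ infDist y A → χ y = 1 := by
    intro y hy
    have key : ∀ z ∈ ball y κ, f z = 1 := by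
      intro z hz
      have h := abs_lt.1 (hdist y z hz)
      have : (1:ℝ) ≤ infDist z A / κ - 2 := by
        rw [le_sub_iff_add_le, le_div_iff₀ hκ]; linarith
      simp [f, min_eq_left this]
    have h0 := key y (mem_ball_self hκ)
    rw [c4 y (fun z hz => by rw [key z hz, h0]), h0]
  refine ⟨χ, c1, ?_, ?_, one, ?_, ?_⟩
  · intro y
    have h1 := c3 y
    rw [hK, one_div_mul_cancel hκ.ne'] at h1
    have := abs_le.1 h1
    have := hf01 y
    rw [abs_le]; constructor <;> linarith
  · intro y hy
    have key : ∀ z ∈ ball y κ, f z = 0 := by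
      intro z hz
      have h := abs_lt.1 (hdist y z hz)
      have : infDist z A / κ - 2 ≤ 0 := by
        rw [sub_nonpos, div_le_iff₀ hκ]; linarith
      simp only [f]
      exact max_eq_left ((min_le_right _ _).trans this)
    have h0 := key y (mem_ball_self hκ)
    rw [c4 y (fun z hz => by rw [key z hz, h0]), h0]
  · intro y
    have := norm_grad_le_of_lip c2 y
    rwa [hK] at this
  · intro y hy
    have : χ =ᶠ[𝓝 y] fun _ => 1 := by
      have : ∀ᶠ z in 𝓝 y, 4 * κ < infDist z A :=
        (continuous_infDist_pt A).continuousAt.eventually (lt_mem_nhds hy)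
      filter_upwards [this] with z hz
      exact one z hz.le
    rw [grad_eventuallyEq this]
    simp [gradient]


lemma cacc (B G A : Set V2) (hB : IsOpen B) (u : V2 → ℝ)
    (hud : ∀ y ∈ B, DifferentiableAt ℝ u y) (M₁ M₂ MV : ℝ)
    (hM₁ : 0 ≤ M₁) (hM₂ : 0 ≤ M₂) (hMV : 0 ≤ MV)
    (hloc : ∀ K, IsCompact K → K ⊆ G → MemLp (gradient u) 2 (volume.restrict K))
    (b : V2 → V2) (c : V2 → ℝ) (hb : ∀ y ∈ B, ‖b y‖ ≤ M₁ * |u y|)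
    (hc : ∀ y ∈ B, |c y| ≤ M₂ * ‖gradient u y‖ + MV * |u y|)
    (htest : ∀ v, Differentiable ℝ v → HasCompactSupport v → tsupport v ⊆ G →
        MemLp (gradient v) 2 →
        Integrable (fun y => ⟪gradient u y + b y, gradient v y⟫ + c y * v y) ∧
        ∫ y, (⟪gradient u y + b y, gradient v y⟫ + c y * v y) = 0)
    (p₀ : V2) (R n : ℝ) (hR : 0 < R) (hn : 0 ≤ n) (hRB : closedBall p₀ R ⊆ B)
    (hp₀ : p₀ ∈ A)
    (hAG : ∀ y ∈ closedBall p₀ R, y ∉ A → y ∈ G)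
    (hLip : ∀ p ∈ A, ∀ y ∈ A ∪ ball p₀ R, |u y - u p| ≤ n * dist y p) :
    ∃ C : ℝ, ∀ κ, 0 < κ → κ ≤ R →
      ∫⁻ y in {y | y ∈ closedBall p₀ (R / 2) ∧ 4 * κ ≤ infDist y A}, ‖gradient u y‖ₑ ^ 2
        ≤ ENNReal.ofReal C := by
  -- McShane extension
  obtain ⟨ut, hut, hutA⟩ := LipschitzOnWith.extend_real (f := u) (s := A) (K := n.toNNReal)
    (LipschitzOnWith.of_dist_le_mul fun y hy p hp => by
      rw [Real.dist_eq, Real.coe_toNNReal _ hn]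
      exact hLip p hp y (Or.inl hy))
  have hnn : ((n.toNNReal : NNReal) : ℝ) = n := Real.coe_toNNReal _ hn
  have hdA : ∀ y ∈ ball p₀ R, |u y - ut y| ≤ 2 * n * infDist y A := by
    intro y hy
    refine le_of_forall_pos_le_add fun η hη => ?_
    obtain ⟨p, hp, hd⟩ := (infDist_lt_iff (r := infDist y A + η / (2 * n + 1)) ⟨p₀, hp₀⟩).1
      (by linarith [show 0 < η / (2 * n + 1) by positivity])
    have h1 := hLip p hp y (Or.inr hy)
    have h2 := hut.dist_le_mul p y
    rw [Real.dist_eq, hnn, ← hutA hp, dist_comm] at h2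
    have h3 : |u y - ut y| ≤ |u y - u p| + |u p - ut y| := by
      have := abs_add_le (u y - u p) (u p - ut y)
      simpa using this
    have h4 : 2 * n * (η / (2 * n + 1)) ≤ η := by
      rw [mul_div_assoc', div_le_iff₀ (by positivity)]; nlinarith
    have h5 : 2 * n * dist y p ≤ 2 * n * (infDist y A + η / (2 * n + 1)) := by gcongr
    nlinarith
  -- bound for u
  obtain ⟨U, hU⟩ := (isCompact_closedBall p₀ R).exists_bound_of_continuousOn
    (fun y hy => (hud y (hRB hy)).continuousAt.continuousWithinAt)
  have hU0 : 0 ≤ U := (norm_nonneg _).trans (hU p₀ (mem_closedBall_self hR.le))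
  -- fixed cutoff
  let η : ContDiffBump p₀ := ⟨R / 2, 3 / 4 * R, by positivity, by linarith⟩
  have ηs : ContDiff ℝ (⊤ : ℕ∞) η := η.contDiff
  have ηts : tsupport η ⊆ closedBall p₀ (3 / 4 * R) := by rw [η.tsupport_eq]
  have η01 : ∀ y, |η y| ≤ 1 := fun y => by rw [abs_of_nonneg η.nonneg]; exact η.le_one
  have gηcs : HasCompactSupport (gradient η) :=
    HasCompactSupport.of_support_subset_isCompact η.hasCompactSupport.isCompact fun y hy => by
      by_contra h; exact hy (grad_zero_off _ h)
  obtain ⟨Cη, hCη⟩ := gηcs.exists_bound_of_continuous (smooth_grad_cont ηs)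
  have hCη0 : 0 ≤ Cη := (norm_nonneg _).trans (hCη p₀)
  set Z := 3 * n * R with hZ
  set Kc := 9 * n + 2 * Cη * Z with hKc
  set C₃ := (1 / 2 * (2 * Kc + 2 * n + 2 * (M₁ * U) + 2 * M₂ * Z) ^ 2
      + (4 * (M₁ * U) * Kc + 4 * (M₁ * U) * n + 4 * MV * U * Z)) with hC₃
  have hZ0 : 0 ≤ Z := by positivity
  have hKc0 : 0 ≤ Kc := by positivity
  have hC₃0 : 0 ≤ C₃ := by positivity
  refine ⟨2 * (C₃ * volume.real (ball p₀ R)), fun κ hκ hκR => ?_⟩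
  obtain ⟨ζ, ζs, ζL, ζd, -⟩ := mollify ut _ hut κ hκ
  rw [hnn] at ζd
  obtain ⟨χ, χs, χ2, χ0, χ1, χg, χg0⟩ := cut_A A κ hκ
  have hzb : ∀ y ∈ ball p₀ R, |u y - ζ y| ≤ 2 * n * infDist y A + n * κ := by
    intro y hy
    have h1 := hdA y hy
    have h2 := ζd y
    rw [abs_sub_comm] at h2
    have := abs_add_le (u y - ut y) (ut y - ζ y)
    rw [show u y - ut y + (ut y - ζ y) = u y - ζ y by ring] at this
    linarith
  have hinf : ∀ y ∈ ball p₀ R, infDist y A ≤ R := fun y hy =>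
    (infDist_le_dist_of_mem hp₀).trans (mem_ball.1 hy).le
  have hzZ : ∀ y ∈ ball p₀ R, |u y - ζ y| ≤ Z := by
    intro y hy
    refine (hzb y hy).trans ?_
    have := hinf y hy
    have h1 : 2 * n * infDist y A ≤ 2 * n * R := by gcongr
    have h2 : n * κ ≤ n * R := by gcongr
    rw [hZ]; linarith
  let ξ : V2 → ℝ := fun y => η y * χ y
  have ξs : ContDiff ℝ (⊤ : ℕ∞) ξ := ηs.mul χs
  have ξd : Differentiable ℝ ξ := ξs.differentiable (by simp)
  have ζdf : Differentiable ℝ ζ := ζs.differentiable (by simp)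
  have ξ2 : ∀ y, |ξ y| ≤ 2 := fun y => by
    rw [abs_mul]
    calc _ ≤ 1 * (2:ℝ) := by gcongr; exacts [η01 y, χ2 y]
      _ = 2 := one_mul _
  have hgz : ∀ y ∈ ball p₀ R, ‖gradient ξ y‖ * |u y - ζ y| ≤ Kc := by
    intro y hy
    have e : gradient ξ y = η y • gradient χ y + χ y • gradient η y :=
      grad_mul (ηs.differentiable (by simp) y) (χs.differentiable (by simp) y)
    have h1 : ‖gradient ξ y‖ ≤ ‖gradient χ y‖ + 2 * Cη := by
      rw [e]
      refine (norm_add_le _ _).trans ?_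
      rw [norm_smul, norm_smul, Real.norm_eq_abs, Real.norm_eq_abs]
      calc _ ≤ 1 * ‖gradient χ y‖ + 2 * Cη := by
            gcongr
            exacts [η01 y, χ2 y, hCη y]
        _ = _ := by ring
    have h2 : ‖gradient χ y‖ * |u y - ζ y| ≤ 9 * n := by
      rcases lt_or_ge (4 * κ) (infDist y A) with h | h
      · rw [χg0 y h]; simp; positivity
      · have hz := hzb y hy
        have : 2 * n * infDist y A ≤ 2 * n * (4 * κ) := by gcongr
        calc _ ≤ 1 / κ * (9 * n * κ) := by
              gcongr
              · exact χg y
              · linarith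
          _ = _ := by field_simp
    calc _ ≤ (‖gradient χ y‖ + 2 * Cη) * |u y - ζ y| := by gcongr
      _ = ‖gradient χ y‖ * |u y - ζ y| + 2 * Cη * |u y - ζ y| := by ring
      _ ≤ 9 * n + 2 * Cη * Z := by gcongr; exact hzZ y hy
  let v : V2 → ℝ := fun y => ξ y ^ 2 * (u y - ζ y)
  set S := closedBall p₀ (3 / 4 * R) ∩ {y | κ ≤ infDist y A} with hS
  have hSc : IsCompact S := (isCompact_closedBall _ _).inter_right
    (isClosed_le continuous_const (continuous_infDist_pt A))
  have hsub34 : closedBall p₀ (3 / 4 * R) ⊆ ball p₀ R := closedBall_subset_ball (by linarith)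
  have hSG : S ⊆ G := by
    rintro y ⟨h1, h2⟩
    refine hAG y (ball_subset_closedBall (hsub34 h1)) fun h => ?_
    have h2' : κ ≤ infDist y A := h2
    rw [infDist_zero_of_mem h] at h2'
    linarith
  have hξS : Function.support ξ ⊆ S := by
    intro y hy
    have hy' : η y * χ y ≠ 0 := hy
    refine ⟨ηts (subset_tsupport _ (left_ne_zero_of_mul hy')), ?_⟩
    by_contra h
    exact right_ne_zero_of_mul hy' (χ0 y (not_le.1 h).le)
  have hvS0 : Function.support v ⊆ S := by
    intro y hy
    apply hξS
    intro h
    exact hy (by simp [v, h])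
  have hvS : tsupport v ⊆ S := closure_minimal hvS0 hSc.isClosed
  have hvc : HasCompactSupport v := HasCompactSupport.of_support_subset_isCompact hSc hvS0
  have hballB : ball p₀ R ⊆ B := ball_subset_closedBall.trans hRB
  have hvd : Differentiable ℝ v := by
    intro y
    by_cases hy : y ∈ tsupport v
    · have hyB := hballB (hsub34 (hvS hy).1)
      exact ((ξd y).pow 2).mul ((hud y hyB).sub (ζdf y))
    · have := notMem_tsupport_iff_eventuallyEq.1 hy
      exact this.differentiableAt_iff.2 (differentiableAt_const 0)
  have hgv : ∀ y ∈ ball p₀ R, gradient v y = (2 * ξ y * (u y - ζ y)) • gradient ξ y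
      + (ξ y ^ 2) • (gradient u y - gradient ζ y) := by
    intro y hy
    have hdu := hud y (hballB hy)
    have e1 : gradient v y = ξ y ^ 2 • gradient (fun y => u y - ζ y) y
        + (u y - ζ y) • gradient (fun y => ξ y ^ 2) y :=
      grad_mul ((ξd y).pow 2) (hdu.sub (ζdf y))
    have e2 : gradient (fun y => ξ y ^ 2) y = (2 * ξ y) • gradient ξ y := by
      have : (fun y => ξ y ^ 2) = fun y => ξ y * ξ y := by ext; ring
      rw [this, grad_mul (ξd y) (ξd y), ← add_smul]; congr 1; ring
    rw [e1, e2, grad_sub hdu (ζdf y), smul_smul, add_comm]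
    congr 2; ring
  have hv2 : MemLp (gradient v) 2 := by
    have hq : MemLp (S.indicator (gradient u)) 2 := by
      rw [memLp_indicator_iff_restrict hSc.measurableSet]; exact hloc _ hSc hSG
    have hone : MemLp (S.indicator (fun _ => (1:ℝ))) 2 :=
      memLp_indicator_const 2 hSc.measurableSet 1 (Or.inr hSc.measure_lt_top.ne)
    have hm : MemLp (fun y => 4 * ‖S.indicator (gradient u) y‖
      + (4 * Kc + 4 * n) * S.indicator (fun _ => (1:ℝ)) y) 2 :=
      (hq.norm.const_mul 4).add (hone.const_mul _)
    refine hm.mono (measurable_gradient2 v).aestronglyMeasurable (Eventually.of_forall fun y => ?_)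
    refine le_trans ?_ (le_abs_self _)
    by_cases hy : y ∈ S
    · simp only [hy, indicator_of_mem]
      have hyb := hsub34 hy.1
      rw [hgv y hyb]
      refine (norm_add_le _ _).trans ?_
      rw [norm_smul, norm_smul]
      have h1 : ‖2 * ξ y * (u y - ζ y)‖ * ‖gradient ξ y‖ ≤ 4 * Kc := by
        calc _ = 2 * |ξ y| * (‖gradient ξ y‖ * |u y - ζ y|) := by
              simp [abs_mul]; ring
          _ ≤ 2 * 2 * Kc := by gcongr; exacts [ξ2 y, hgz y hyb]
          _ = _ := by ring
      have h2 : ‖ξ y ^ 2‖ ≤ 4 := by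
        rw [norm_pow, Real.norm_eq_abs]
        have := ξ2 y
        have := abs_nonneg (ξ y)
        nlinarith
      have h3 : ‖gradient u y - gradient ζ y‖ ≤ ‖gradient u y‖ + n := by
        refine (norm_sub_le _ _).trans ?_
        have := norm_grad_le_of_lip ζL y
        rw [hnn] at this
        gcongr
      calc _ ≤ 4 * Kc + 4 * (‖gradient u y‖ + n) := by gcongr
        _ = _ := by ring
    · rw [grad_zero_off v fun h => hy (hvS h)]
      simp [hy]
  obtain ⟨ei, e0⟩ := htest v hvd hvc (hvS.trans hSG) hv2
  set e := fun y => ⟪gradient u y + b y, gradient v y⟫ + c y * v y with he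
  have hpw : ∀ y, 1 / 2 * (ξ y ^ 2 * ‖gradient u y‖ ^ 2)
      ≤ e y + (ball p₀ R).indicator (fun _ => C₃) y := by
    intro y
    by_cases hy : y ∈ ball p₀ R
    · have hyc := ball_subset_closedBall hy
      have hyB := hballB hy
      have hu' : |u y| ≤ U := hU y hyc
      have := pw_cacc (gradient u y) (b y) (gradient ξ y) (gradient ζ y) (ξ y) (u y - ζ y) (c y)
        Kc n U Z M₁ M₂ MV (ξ2 y) (hgz y hy) (by simpa [hnn] using norm_grad_le_of_lip ζL y)
        ((hb y hyB).trans (by gcongr)) hU0 hM₁ hM₂ hMV ((hc y hyB).trans (by gcongr)) (hzZ y hy)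
      rw [indicator_of_mem hy, he]
      simp only
      rw [hgv y hy]
      change _ ≤ _ + c y * (ξ y ^ 2 * (u y - ζ y)) + C₃
      linarith
    · have h1 : y ∉ S := fun h => hy (hsub34 h.1)
      have h2 : ξ y = 0 := by by_contra h; exact h1 (hξS h)
      have h3 : v y = 0 := by simp [v, h2]
      rw [indicator_of_notMem hy, he]
      simp only
      rw [grad_zero_off v fun h => h1 (hvS h), h3, h2]
      simp
  have hind : Integrable ((ball p₀ R).indicator (fun _ => C₃)) :=
    (integrable_indicator_iff measurableSet_ball).2 (integrableOn_const (measure_ball_lt_top.ne))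
  have hmeas : Measurable fun y => ξ y ^ 2 * ‖gradient u y‖ ^ 2 :=
    (ξs.continuous.measurable.pow_const 2).mul ((measurable_gradient2 u).norm.pow_const 2)
  have hi : Integrable (fun y => 1 / 2 * (ξ y ^ 2 * ‖gradient u y‖ ^ 2)) := by
    refine (ei.add hind).mono (hmeas.const_mul _).aestronglyMeasurable
      (Eventually.of_forall fun y => ?_)
    rw [Real.norm_of_nonneg (by positivity)]
    exact (hpw y).trans (le_abs_self _)
  have hle := integral_mono hi (ei.add hind) hpw
  have hr : ∫ y, (e + (ball p₀ R).indicator (fun _ => C₃)) y = C₃ * volume.real (ball p₀ R) := by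
    simp only [Pi.add_apply]
    rw [integral_add ei hind, e0, integral_indicator_const _ measurableSet_ball]
    simp [mul_comm]
  rw [hr, integral_const_mul] at hle
  have hi' : Integrable (fun y => ξ y ^ 2 * ‖gradient u y‖ ^ 2) := by
    have := hi.const_mul 2
    refine this.congr (Eventually.of_forall fun y => ?_)
    simp only; ring
  calc _ ≤ ∫⁻ y in {y | y ∈ closedBall p₀ (R / 2) ∧ 4 * κ ≤ infDist y A},
        ENNReal.ofReal (ξ y ^ 2 * ‖gradient u y‖ ^ 2) := by
        refine setLIntegral_mono hmeas.ennreal_ofReal fun y hy => ?_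
        have h1 : ξ y = 1 := by
          have : η y = 1 := η.one_of_mem_closedBall hy.1
          simp [ξ, this, χ1 y hy.2]
        rw [h1, one_pow, one_mul, ENNReal.ofReal_pow (norm_nonneg _), ofReal_norm]
    _ ≤ ∫⁻ y, ENNReal.ofReal (ξ y ^ 2 * ‖gradient u y‖ ^ 2) := setLIntegral_le_lintegral _ _
    _ = ENNReal.ofReal (∫ y, ξ y ^ 2 * ‖gradient u y‖ ^ 2) :=
        (ofReal_integral_eq_lintegral_ofReal hi' (Eventually.of_forall fun y => by positivity)).symm
    _ ≤ _ := by
        apply ENNReal.ofReal_le_ofReal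
        linarith


lemma memLp_of_loc (u : V2 → ℝ) (G K : Set V2) (hK : IsCompact K) (hKG : K ⊆ G)
    (h : ∀ p ∈ G, ∃ r > 0, ∫⁻ y in ball p r, ‖gradient u y‖ₑ ^ 2 < ⊤) :
    MemLp (gradient u) 2 (volume.restrict K) := by
  have hm : Measurable fun y => ‖gradient u y‖ₑ ^ 2 := (measurable_gradient2 u).enorm.pow_const 2
  let μ : Measure V2 := volume.withDensity fun y => ‖gradient u y‖ₑ ^ 2
  have hf : μ K < ⊤ := by
    refine hK.measure_lt_top_of_nhdsWithin fun p hp => ?_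
    obtain ⟨r, hr, hlt⟩ := h p (hKG hp)
    refine ⟨ball p r, mem_nhdsWithin_of_mem_nhds (ball_mem_nhds p hr), ?_⟩
    rw [withDensity_apply _ measurableSet_ball]; exact hlt
  rw [withDensity_apply _ hK.measurableSet] at hf
  refine ⟨(measurable_gradient2 u).aestronglyMeasurable, ?_⟩
  rw [eLpNorm_lt_top_iff_lintegral_rpow_enorm_lt_top (by norm_num) (by norm_num)]
  simpa using hf

lemma loc_L2 (B : Set V2) (hB : IsOpen B)
    (W₁ W₂ : V2 → V2) (V u : V2 → ℝ) (M₁ M₂ MV : ℝ)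
    (hM₁ : 0 ≤ M₁) (hM₂ : 0 ≤ M₂) (hMV : 0 ≤ MV)
    (hW₁ : ∀ y ∈ B, ‖W₁ y‖ ≤ M₁) (hW₂ : ∀ y ∈ B, ‖W₂ y‖ ≤ M₂) (hV : ∀ y ∈ B, |V y| ≤ MV)
    (hud : ∀ y ∈ B, DifferentiableAt ℝ u y)
    (hw : IsWeakSol B W₁ W₂ V u) :
    ∀ K, IsCompact K → K ⊆ B → MemLp (gradient u) 2 (volume.restrict K) := by
  have hucB : ContinuousOn u B := fun y hy => (hud y hy).continuousAt.continuousWithinAt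
  set G : Set V2 := {p | p ∈ B ∧ ∃ r > 0, ∫⁻ y in ball p r, ‖gradient u y‖ₑ ^ 2 < ⊤} with hG
  have hGB : G ⊆ B := fun p hp => hp.1
  have hGo : IsOpen G := by
    rw [isOpen_iff_mem_nhds]
    rintro p ⟨hp, r, hr, hlt⟩
    filter_upwards [hB.mem_nhds hp, ball_mem_nhds p (half_pos hr)] with q hq1 hq2
    refine ⟨hq1, r / 2, half_pos hr, (lintegral_mono_set ?_).trans_lt hlt⟩
    refine ball_subset_ball' ?_
    linarith [mem_ball.1 hq2]
  have hlocG : ∀ K, IsCompact K → K ⊆ G → MemLp (gradient u) 2 (volume.restrict K) :=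
    fun K hK hKG => memLp_of_loc u G K hK hKG fun p hp => hp.2
  suffices hBG : B ⊆ G from fun K hK hKB => hlocG K hK (hKB.trans hBG)
  by_contra hne
  obtain ⟨b, c, hb, hc, htest⟩ := test_all B G hB hGo hGB W₁ W₂ V u M₁ M₂ MV hM₁ hM₂ hMV
    hW₁ hW₂ hV hucB hlocG hw
  set F : Set V2 := B ∩ Gᶜ with hF
  have hFlc : IsLocallyClosed F := hB.isLocallyClosed.inter hGo.isClosed_compl.isLocallyClosed
  have : LocallyCompactSpace F := hFlc.locallyCompactSpace
  have : Nonempty F := by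
    obtain ⟨p, hp1, hp2⟩ := not_subset.1 hne
    exact ⟨⟨p, hp1, hp2⟩⟩
  have hucF : Continuous fun p : F => u p.1 :=
    continuousOn_iff_continuous_domRestrict.1 (hucB.mono inter_subset_left)
  let Fm : ℕ → Set F := fun m => {p | ∀ y ∈ B, dist y p.1 < 1 / ((m:ℝ) + 1) →
    |u y - u p.1| ≤ (m + 1) * dist y p.1}
  have hFmc : ∀ m, IsClosed (Fm m) := by
    intro m
    have : Fm m = ⋂ y ∈ B, ({p : F | 1 / ((m:ℝ) + 1) ≤ dist y p.1} ∪
        {p : F | |u y - u p.1| ≤ (m + 1) * dist y p.1}) := by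
      ext p
      simp only [Fm, mem_ofPred_eq, mem_iInter, mem_union]
      refine forall₂_congr fun y _ => ?_
      rw [imp_iff_not_or, not_lt]
    rw [this]
    refine isClosed_biInter fun y _ => IsClosed.union ?_ ?_
    · exact isClosed_le continuous_const (continuous_const.dist continuous_subtype_val)
    · exact isClosed_le (continuous_const.sub hucF).abs
        (continuous_const.mul (continuous_const.dist continuous_subtype_val))
  have hFmu : ⋃ m, Fm m = univ := by
    refine eq_univ_of_forall fun p => ?_
    have hO := (hud p.1 p.2.1).hasFDerivAt.isBigO_sub
    obtain ⟨C, hC⟩ := hO.bound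
    obtain ⟨r, hr, hrb⟩ := Metric.eventually_nhds_iff.1 hC
    obtain ⟨m, hm⟩ := exists_nat_ge (max C (1 / r))
    refine mem_iUnion.2 ⟨m, fun y hy hd => ?_⟩
    have h1 : 1 / ((m:ℝ) + 1) < r := by
      rw [one_div_lt (by positivity) hr]
      linarith [(le_max_right C (1 / r)).trans hm]
    have h2 := hrb (hd.trans h1)
    rw [Real.norm_eq_abs, ← dist_eq_norm] at h2
    refine h2.trans ?_
    gcongr
    linarith [(le_max_left C (1 / r)).trans hm]
  obtain ⟨m, ⟨p₀, hp₀⟩⟩ := nonempty_interior_of_iUnion_of_closed hFmc hFmu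
  rw [mem_interior_iff_mem_nhds, Metric.mem_nhds_iff] at hp₀
  obtain ⟨ρ, hρ, hρs⟩ := hp₀
  obtain ⟨ρ', hρ', hρB⟩ := Metric.isOpen_iff.1 hB p₀.1 p₀.2.1
  set n : ℝ := m + 1 with hn
  have hn0 : 0 < n := by positivity
  set R := min (min ρ ρ') (1 / n) / 4 with hR
  have hR0 : 0 < R := by positivity
  have hR1 : 4 * R ≤ ρ := by
    rw [hR]; linarith [min_le_left (min ρ ρ') (1 / n), min_le_left ρ ρ']
  have hR2 : 4 * R ≤ ρ' := by
    rw [hR]; linarith [min_le_left (min ρ ρ') (1 / n), min_le_right ρ ρ']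
  have hR3 : 4 * R ≤ 1 / n := by
    rw [hR]; linarith [min_le_right (min ρ ρ') (1 / n)]
  set A : Set V2 := F ∩ ball p₀.1 (2 * R) with hA
  have hAF : ∀ p ∈ A, ∀ y ∈ B, dist y p < 1 / n → |u y - u p| ≤ n * dist y p := by
    rintro p ⟨hpF, hpb⟩
    have : (⟨p, hpF⟩ : F) ∈ Fm m := hρs (by
      rw [mem_ball, Subtype.dist_eq]
      have := mem_ball.1 hpb
      linarith)
    exact this
  have hRB : closedBall p₀.1 R ⊆ B := fun y hy => hρB (by
    have := mem_closedBall.1 hy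
    rw [mem_ball]; linarith)
  have hLip : ∀ p ∈ A, ∀ y ∈ A ∪ ball p₀.1 R, |u y - u p| ≤ n * dist y p := by
    intro p hp y hy
    have h1 := mem_ball.1 hp.2
    have h2 : dist y p₀.1 < 2 * R := by
      rcases hy with hy | hy
      · exact hy.2
      · have := mem_ball.1 hy; linarith
    have h3 : y ∈ B := hρB (by rw [mem_ball]; linarith)
    refine hAF p hp y h3 ?_
    have := dist_triangle_right y p p₀.1
    linarith
  have hp₀A : p₀.1 ∈ A := ⟨p₀.2, mem_ball_self (by positivity)⟩
  obtain ⟨C, hC⟩ := cacc B G A hB u hud M₁ M₂ MV hM₁ hM₂ hMV hlocG b c hb hc htest p₀.1 R n hR0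
    hn0.le hRB hp₀A (by
      intro y hy hyA
      by_contra hyG
      exact hyA ⟨⟨hRB hy, hyG⟩, mem_ball.2 (by linarith [mem_closedBall.1 hy])⟩) hLip
  let D : ℕ → Set V2 := fun k => {y | y ∈ closedBall p₀.1 (R / 2) ∧
    4 * (R / (k + 1)) ≤ infDist y A}
  have hDmono : Monotone D := by
    intro k l hkl y hy
    refine ⟨hy.1, le_trans ?_ hy.2⟩
    gcongr
  have hD : ∫⁻ y in ⋃ k, D k, ‖gradient u y‖ₑ ^ 2 ≤ ENNReal.ofReal C := by
    rw [setLIntegral_iUnion_of_directed _ hDmono.directed_le]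
    refine iSup_le fun k => hC _ (by positivity) ?_
    rw [div_le_iff₀ (by positivity)]
    have : (0:ℝ) ≤ k := Nat.cast_nonneg k
    nlinarith
  have hAg : ∫⁻ y in A, ‖gradient u y‖ₑ ^ 2 < ⊤ := by
    have : ∫⁻ y in A, ‖gradient u y‖ₑ ^ 2 ≤ ∫⁻ y in A, ENNReal.ofReal n ^ 2 := by
      refine setLIntegral_mono measurable_const fun y hy => ?_
      gcongr
      rw [← ofReal_norm]
      refine ENNReal.ofReal_le_ofReal ?_
      rw [gradient, LinearIsometryEquiv.norm_map]
      refine (hud y hy.1.1).hasFDerivAt.le_of_lip' hn0.le ?_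
      filter_upwards [hB.mem_nhds hy.1.1, ball_mem_nhds y (show 0 < 1 / n by positivity)]
        with z hz1 hz2
      rw [← dist_eq_norm z y]
      exact hAF y hy z hz1 hz2
    refine this.trans_lt ?_
    rw [setLIntegral_const]
    refine ENNReal.mul_lt_top (by simp) ?_
    exact (measure_mono inter_subset_right).trans_lt measure_ball_lt_top
  refine p₀.2.2 ⟨p₀.2.1, R / 2, half_pos hR0, ?_⟩
  calc _ ≤ ∫⁻ y in (⋃ k, D k) ∪ A, ‖gradient u y‖ₑ ^ 2 := by
        refine lintegral_mono_set fun y hy => ?_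
        by_cases hyA : y ∈ A
        · exact Or.inr hyA
        left
        have hyB : y ∈ B := hRB (mem_closedBall.2 (by linarith [mem_ball.1 hy]))
        have hyG : y ∈ G := by
          by_contra hyG
          exact hyA ⟨⟨hyB, hyG⟩, mem_ball.2 (by linarith [mem_ball.1 hy])⟩
        have hycl : y ∉ closure A := by
          intro h
          obtain ⟨z, hz1, hz2⟩ := mem_closure_iff.1 h G hGo hyG
          exact hz2.1.2 hz1
        have hpos : 0 < infDist y A := by
          refine lt_of_le_of_ne infDist_nonneg fun h => hycl ?_
          rw [mem_closure_iff_infDist_zero ⟨p₀.1, hp₀A⟩]; exact h.symm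
        obtain ⟨k, hk⟩ := exists_nat_ge (4 * R / infDist y A)
        refine mem_iUnion.2 ⟨k, ball_subset_closedBall hy, ?_⟩
        rw [div_le_iff₀ hpos] at hk
        rw [mul_div_assoc', div_le_iff₀ (by positivity)]
        nlinarith
    _ ≤ _ := lintegral_union_le _ _ _
    _ < ⊤ := ENNReal.add_lt_top.2 ⟨hD.trans_lt ENNReal.ofReal_lt_top, hAg⟩


lemma memLp_ind_cont {E : Type*} [NormedAddCommGroup E] [MeasurableSpace E] [BorelSpace E]
    [SecondCountableTopology E] (K : Set V2) (hK : IsCompact K)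
    (F : V2 → E) (hF : Continuous F) : MemLp (K.indicator F) 2 := by
  rw [memLp_indicator_iff_restrict hK.measurableSet]
  have : IsFiniteMeasure (volume.restrict K) := ⟨by simpa using hK.measure_lt_top⟩
  obtain ⟨C, hC⟩ := hK.exists_bound_of_continuousOn hF.continuousOn
  refine MemLp.of_bound hF.aestronglyMeasurable C ?_
  filter_upwards [ae_restrict_mem hK.measurableSet] with y hy using hC y hy

lemma grad_inner_int (w : V2 → ℝ) (hwc : HasCompactSupport w) (hw2 : MemLp (gradient w) 2)
    (F : V2 → V2) (hF : Continuous F) : Integrable (fun y => ⟪gradient w y, F y⟫) := by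
  refine (memLp_inner_integrable hw2 (memLp_ind_cont (tsupport w) hwc.isCompact F hF)).congr
    (Eventually.of_forall fun y => ?_)
  by_cases hy : y ∈ tsupport w
  · simp [hy]
  · simp [grad_zero_off w hy]

lemma ibp1 (w Y : V2 → ℝ) (a : V2) (hw : Differentiable ℝ w) (hwc : HasCompactSupport w)
    (hw2 : MemLp (gradient w) 2) (hY : ContDiff ℝ (⊤ : ℕ∞) Y) :
    ∫ y, w y * fderiv ℝ Y y a = - ∫ y, fderiv ℝ w y a * Y y := by
  have hYf : Continuous fun y => fderiv ℝ Y y a :=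
    (hY.continuous_fderiv (by simp)).clm_apply continuous_const
  refine integral_mul_fderiv_eq_neg_fderiv_mul_of_integrable ?_ ?_ ?_
    (fun y _ => hw y) (fun y _ => hY.differentiable (by simp) y)
  · refine (grad_inner_int w hwc hw2 (fun y => Y y • a)
      (hY.continuous.smul continuous_const)).congr (Eventually.of_forall fun y => ?_)
    simp only
    rw [inner_smul_right, inner_grad, mul_comm]
  · exact (hw.continuous.mul hYf).integrable_of_hasCompactSupport hwc.mul_right
  · exact (hw.continuous.mul hY.continuous).integrable_of_hasCompactSupport hwc.mul_right

lemma poincare (x : V2) (ε : ℝ) (hε : 0 < ε) (g : V2 → ℝ) (hg : Differentiable ℝ g)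
    (hgc : HasCompactSupport g) (hgs : tsupport g ⊆ ball x ε) (hg2 : MemLp (gradient g) 2) :
    ∫ y, g y ^ 2 ≤ 4 * ε ^ 2 * ∫ y, ‖gradient g y‖ ^ 2 := by
  have hgL : MemLp g 2 := hg.continuous.memLp_of_hasCompactSupport hgc
  have hi1 : Integrable fun y => g y ^ 2 := by
    simpa using hgL.integrable_norm_pow (p := 2) (by norm_num)
  have hi2 : Integrable fun y => ‖gradient g y‖ ^ 2 :=
    hg2.integrable_norm_pow (p := 2) (by norm_num)
  obtain ⟨C, hC⟩ := hgc.exists_bound_of_continuous hg.continuous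
  have hgr : ∀ y, gradient (fun y => g y ^ 2) y = (2 * g y) • gradient g y := by
    intro y
    have : (fun y => g y ^ 2) = fun y => g y * g y := by ext; ring
    rw [this, grad_mul (hg y) (hg y), ← add_smul]; congr 1; ring
  have hc2 : HasCompactSupport fun y => g y ^ 2 := by
    have : (fun y => g y ^ 2) = fun y => g y * g y := by ext; ring
    rw [this]; exact hgc.mul_right
  have hm2 : MemLp (gradient fun y => g y ^ 2) 2 := by
    refine (hg2.norm.const_mul (2 * C)).mono (measurable_gradient2 _).aestronglyMeasurable
      (Eventually.of_forall fun y => ?_)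
    rw [hgr, norm_smul]
    refine le_trans ?_ (le_abs_self _)
    rw [norm_mul, Real.norm_ofNat]
    gcongr
    exact hC y
  let a : V2 := EuclideanSpace.single 0 1
  have ha : ‖a‖ = 1 := by simp [a]
  let ψ : V2 → ℝ := fun y => ⟪a, y - x⟫
  have hψ : ContDiff ℝ (⊤ : ℕ∞) ψ := by
    exact contDiff_const.inner ℝ (contDiff_id.sub contDiff_const)
  have hψf : ∀ y, fderiv ℝ ψ y a = 1 := by
    intro y
    have h : HasFDerivAt ψ (innerSL ℝ a) y := by
      exact (innerSL ℝ a).hasFDerivAt.comp y ((hasFDerivAt_id (𝕜 := ℝ) y).sub_const x)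
    rw [h.fderiv]
    simp [ha]
  have key := ibp1 (fun y => g y ^ 2) ψ a (hg.pow 2) hc2 hm2 hψ
  simp only [hψf, mul_one] at key
  rw [key, ← integral_neg]
  have hle : ∫ y, -(fderiv ℝ (fun y => g y ^ 2) y a * ψ y) ≤
      ∫ y, (1 / 2 * g y ^ 2 + 2 * ε ^ 2 * ‖gradient g y‖ ^ 2) := by
    refine integral_mono ?_ ((hi1.const_mul _).add (hi2.const_mul _)) fun y => ?_
    · refine ((grad_inner_int _ hc2 hm2 (fun y => ψ y • a)
        (hψ.continuous.smul continuous_const)).congr (Eventually.of_forall fun y => ?_)).neg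
      simp only
      rw [inner_smul_right, inner_grad, mul_comm]
    · simp only
      rw [← inner_grad, hgr, inner_smul_left]
      simp only [map_mul, conj_trivial]
      by_cases hy : y ∈ tsupport g
      · have h1 : |⟪gradient g y, a⟫| ≤ ‖gradient g y‖ := by
          have := abs_real_inner_le_norm (gradient g y) a
          rwa [ha, mul_one] at this
        have h2 : |ψ y| ≤ ε := by
          have := abs_real_inner_le_norm a (y - x)
          rw [ha, one_mul] at this
          exact this.trans (by rw [← dist_eq_norm]; exact (mem_ball.1 (hgs hy)).le)
        have h3 : -(2 * g y * ⟪gradient g y, a⟫ * ψ y) ≤ 2 * |g y| * ‖gradient g y‖ * ε := by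
          refine (neg_le_abs _).trans ?_
          rw [abs_mul, abs_mul, abs_mul, abs_two]
          gcongr
        refine h3.trans ?_
        nlinarith [sq_nonneg (|g y| - 2 * (ε * ‖gradient g y‖)), sq_abs (g y)]
      · rw [image_eq_zero_of_notMem_tsupport hy]
        simp; positivity
  rw [integral_add (hi1.const_mul _) (hi2.const_mul _), integral_const_mul,
    integral_const_mul] at hle
  rw [integral_neg, ← key] at hle ⊢
  linarith

lemma phi_test (x : V2) (ε : ℝ) (u : V2 → ℝ)
    (huc : ContinuousOn u (closedBall x ε)) (hud : ∀ y ∈ ball x ε, DifferentiableAt ℝ u y)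
    (hloc : ∀ K, IsCompact K → K ⊆ ball x ε → MemLp (gradient u) 2 (volume.restrict K))
    (β : ℝ) (hβ : ∀ y ∈ sphere x ε, β < u y) (Φ Φ' : ℝ → ℝ) (L : ℝ)
    (h0 : ∀ s, β ≤ s → Φ s = 0) (hd : ∀ y ∈ ball x ε, HasDerivAt Φ (Φ' (u y)) (u y))
    (hL : ∀ y ∈ ball x ε, |Φ' (u y)| ≤ L) :
    Differentiable ℝ ((ball x ε).indicator fun y => Φ (u y)) ∧
    HasCompactSupport ((ball x ε).indicator fun y => Φ (u y)) ∧
    tsupport ((ball x ε).indicator fun y => Φ (u y)) ⊆ ball x ε ∧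
    MemLp (gradient ((ball x ε).indicator fun y => Φ (u y))) 2 ∧
    ∀ y ∈ ball x ε, gradient ((ball x ε).indicator fun y => Φ (u y)) y
      = Φ' (u y) • gradient u y := by
  set v := (ball x ε).indicator fun y => Φ (u y) with hv
  set S := closedBall x ε ∩ u ⁻¹' (Iic β) with hS
  have hSc : IsCompact S := by
    refine (isCompact_closedBall x ε).of_isClosed_subset ?_ inter_subset_left
    exact huc.preimage_isClosed_of_isClosed isClosed_closedBall isClosed_Iic
  have hSB : S ⊆ ball x ε := by
    rintro y ⟨h1, h2⟩
    rcases (mem_closedBall.1 h1).lt_or_eq with h | h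
    · exact h
    · exact absurd (hβ y h) (not_lt.2 h2)
  have hvS0 : Function.support v ⊆ S := by
    intro y hy
    have hyB : y ∈ ball x ε := by
      by_contra h; exact hy (indicator_of_notMem h _)
    refine ⟨ball_subset_closedBall hyB, ?_⟩
    by_contra h
    refine hy ?_
    rw [hv, indicator_of_mem hyB]
    exact h0 _ (not_le.1 h).le
  have hvS : tsupport v ⊆ S := closure_minimal hvS0 hSc.isClosed
  have hev : ∀ y ∈ ball x ε, v =ᶠ[𝓝 y] fun y => Φ (u y) := by
    intro y hy
    filter_upwards [isOpen_ball.mem_nhds hy] with z hz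
    rw [hv, indicator_of_mem hz]
  have hfd : ∀ y ∈ ball x ε, HasFDerivAt (fun y => Φ (u y)) (Φ' (u y) • fderiv ℝ u y) y := by
    intro y hy
    exact (hd y hy).comp_hasFDerivAt y (hud y hy).hasFDerivAt
  have hvd : Differentiable ℝ v := by
    intro y
    by_cases hy : y ∈ tsupport v
    · have hyB := hSB (hvS hy)
      exact (hev y hyB).differentiableAt_iff.2 (hfd y hyB).differentiableAt
    · have := notMem_tsupport_iff_eventuallyEq.1 hy
      exact this.differentiableAt_iff.2 (differentiableAt_const 0)
  have hgr : ∀ y ∈ ball x ε, gradient v y = Φ' (u y) • gradient u y := by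
    intro y hy
    rw [grad_eventuallyEq (hev y hy), gradient, (hfd y hy).fderiv, gradient]
    simp
  refine ⟨hvd, HasCompactSupport.of_support_subset_isCompact hSc hvS0, hvS.trans hSB, ?_, hgr⟩
  have hq : MemLp (S.indicator (gradient u)) 2 := by
    rw [memLp_indicator_iff_restrict hSc.measurableSet]; exact hloc _ hSc hSB
  refine (hq.norm.const_mul L).mono (measurable_gradient2 v).aestronglyMeasurable
    (Eventually.of_forall fun y => ?_)
  refine le_trans ?_ (le_abs_self _)
  by_cases hy : y ∈ S
  · rw [hgr y (hSB hy), norm_smul, indicator_of_mem hy]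
    gcongr
    exact hL y (hSB hy)
  · rw [grad_zero_off v fun h => hy (hvS h)]; simp [hy]

lemma hasDerivAt_max_sq (s : ℝ) : HasDerivAt (fun s : ℝ => max s 0 ^ 2) (2 * max s 0) s := by
  rcases lt_trichotomy s 0 with h | h | h
  · have : (fun s : ℝ => max s 0 ^ 2) =ᶠ[𝓝 s] fun _ => 0 := by
      filter_upwards [gt_mem_nhds h] with t ht
      simp [max_eq_right ht.le]
    rw [max_eq_right h.le, mul_zero]
    exact (hasDerivAt_const s (0:ℝ)).congr_of_eventuallyEq this
  · subst h
    simp only [max_self, mul_zero]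
    rw [hasDerivAt_iff_isLittleO]
    simp only [max_self, sub_zero, smul_zero, ne_eq, OfNat.ofNat_ne_zero, not_false_eq_true,
      zero_pow]
    have : (fun s : ℝ => max s 0 ^ 2) =O[𝓝 0] fun s => s ^ 2 := by
      refine Asymptotics.IsBigO.of_bound 1 (Eventually.of_forall fun s => ?_)
      rw [one_mul, norm_pow, norm_pow]
      gcongr
      rw [Real.norm_eq_abs, Real.norm_eq_abs, abs_of_nonneg (le_max_right _ _)]
      exact max_le (le_abs_self s) (abs_nonneg s)
    exact this.trans_isLittleO (Asymptotics.isLittleO_pow_id (by norm_num))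
  · have : (fun s : ℝ => max s 0 ^ 2) =ᶠ[𝓝 s] fun s => s ^ 2 := by
      filter_upwards [lt_mem_nhds h] with t ht
      simp [max_eq_left ht.le]
    rw [max_eq_left h.le]
    have h2 : HasDerivAt (fun s : ℝ => s ^ 2) (2 * s) s := by simpa using hasDerivAt_pow 2 s
    exact h2.congr_of_eventuallyEq this

lemma hasDerivAt_P2 (β s : ℝ) :
    HasDerivAt (fun s : ℝ => max (β - s) 0 ^ 2) (-(2 * max (β - s) 0)) s := by
  have := (hasDerivAt_max_sq (β - s)).comp s ((hasDerivAt_id s).const_sub β)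
  simpa [Function.comp_def] using this

lemma hasDerivAt_P3 (β s : ℝ) :
    HasDerivAt (fun s : ℝ => max (β - s) 0 ^ 3) (-(3 * max (β - s) 0 ^ 2)) s := by
  have h := ((hasDerivAt_id s).const_sub β).mul (hasDerivAt_P2 β s)
  have e : ∀ t : ℝ, t * max t 0 = max t 0 ^ 2 := by
    intro t
    rcases le_total t 0 with h | h
    · simp [max_eq_right h]
    · rw [max_eq_left h]; ring
  have e1 : (fun s : ℝ => max (β - s) 0 ^ 3) = (fun x => β - id x) * fun s => max (β - s) 0 ^ 2 := by
    ext s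
    have := e (β - s)
    simp only [Pi.mul_apply, id]
    calc max (β - s) 0 ^ 3 = max (β - s) 0 ^ 2 * max (β - s) 0 := by ring
      _ = _ := by rw [← this]; ring_nf; rw [← this]; ring
  rw [e1]
  have := e (β - s)
  refine h.congr_deriv ?_
  simp only [id]
  linear_combination (-2) * this


lemma u_nonneg (x : V2) (ε : ℝ) (hε : 0 < ε) (u : V2 → ℝ)
    (huc : ContinuousOn u (closedBall x ε)) (hud : ∀ y ∈ ball x ε, DifferentiableAt ℝ u y)
    (hloc : ∀ K, IsCompact K → K ⊆ ball x ε → MemLp (gradient u) 2 (volume.restrict K))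
    (M₁ M₂ MV : ℝ) (hM₁ : 0 ≤ M₁) (hM₂ : 0 ≤ M₂) (hMV : 0 ≤ MV)
    (hsm : (3 * M₁ + M₂) * ε + 4 * MV * ε ^ 2 ≤ 1 / 2)
    (b : V2 → V2) (c : V2 → ℝ) (hb : ∀ y ∈ ball x ε, ‖b y‖ ≤ M₁ * |u y|)
    (hc : ∀ y ∈ ball x ε, |c y| ≤ M₂ * ‖gradient u y‖ + MV * |u y|)
    (htest : ∀ v, Differentiable ℝ v → HasCompactSupport v → tsupport v ⊆ ball x ε →
        MemLp (gradient v) 2 →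
        Integrable (fun y => ⟪gradient u y + b y, gradient v y⟫ + c y * v y) ∧
        ∫ y, (⟪gradient u y + b y, gradient v y⟫ + c y * v y) = 0)
    (hpos : ∀ y ∈ sphere x ε, 0 < u y) : ∀ y ∈ ball x ε, 0 ≤ u y := by
  obtain ⟨U, hU⟩ := (isCompact_closedBall x ε).exists_bound_of_continuousOn huc
  have hU0 : 0 ≤ U := (norm_nonneg _).trans (hU x (mem_closedBall_self hε.le))
  have hf : ∀ y ∈ ball x ε, 0 ≤ max (0 - u y) 0 ∧ max (0 - u y) 0 ≤ U := by
    intro y hy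
    refine ⟨le_max_right _ _, max_le ?_ hU0⟩
    have := hU y (ball_subset_closedBall hy)
    rw [Real.norm_eq_abs] at this
    linarith [neg_le_abs (u y)]
  obtain ⟨gd, gc, gs, g2, gg⟩ := phi_test x ε u huc hud hloc 0 hpos
    (fun s => max (0 - s) 0 ^ 2) (fun s => -(2 * max (0 - s) 0)) (2 * U)
    (by intro s hs; rw [max_eq_right (by linarith)]; simp) (fun y _ => hasDerivAt_P2 0 (u y))
    (by
      intro y hy
      obtain ⟨h1, h2⟩ := hf y hy
      rw [abs_neg, abs_of_nonneg (by positivity)]; linarith)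
  obtain ⟨vd, vc, vs, v2, vg⟩ := phi_test x ε u huc hud hloc 0 hpos
    (fun s => max (0 - s) 0 ^ 3) (fun s => -(3 * max (0 - s) 0 ^ 2)) (3 * U ^ 2)
    (by intro s hs; rw [max_eq_right (by linarith)]; simp) (fun y _ => hasDerivAt_P3 0 (u y))
    (by
      intro y hy
      obtain ⟨h1, h2⟩ := hf y hy
      rw [abs_neg, abs_of_nonneg (by positivity)]; gcongr)
  obtain ⟨ei, e0⟩ := htest _ vd vc vs v2
  have hpo := poincare x ε hε _ gd gc gs g2
  set g := (ball x ε).indicator fun y => max (0 - u y) 0 ^ 2 with hg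
  set v := (ball x ε).indicator fun y => max (0 - u y) 0 ^ 3 with hv
  set k := 3 * M₁ + M₂ with hk
  have hk0 : 0 ≤ k := by positivity
  have hpw : ∀ y, (3 / 4 - k * ε / 2) * ‖gradient g y‖ ^ 2 - (k / (8 * ε) + MV) * g y ^ 2 ≤
      -(⟪gradient u y + b y, gradient v y⟫ + c y * v y) := by
    intro y
    by_cases hy : y ∈ ball x ε
    · obtain ⟨f0, -⟩ := hf y hy
      have hgy : g y = max (0 - u y) 0 ^ 2 := by rw [hg, indicator_of_mem hy]
      have hvy : v y = max (0 - u y) 0 ^ 3 := by rw [hv, indicator_of_mem hy]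
      have hfu : max (0 - u y) 0 * |u y| = max (0 - u y) 0 ^ 2 := by
        rcases le_total (u y) 0 with h | h
        · rw [abs_of_nonpos h, max_eq_left (by linarith)]; ring
        · rw [max_eq_right (by linarith)]; ring
      rw [gg y hy, vg y hy, hgy, hvy]
      set f := max (0 - u y) 0 with hfdef
      set q := ‖gradient u y‖ with hq
      have hq0 : 0 ≤ q := norm_nonneg _
      rw [norm_smul, Real.norm_eq_abs, abs_neg, abs_of_nonneg (by positivity), inner_smul_right,
        inner_add_left, real_inner_self_eq_norm_sq, ← hq]
      have h1 : |⟪b y, gradient u y⟫| * f ≤ M₁ * f ^ 2 * q := by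
        calc _ ≤ (M₁ * |u y| * q) * f := by
              gcongr
              exact (abs_real_inner_le_norm _ _).trans (by gcongr; exact hb y hy)
          _ = M₁ * (f * |u y|) * q := by ring
          _ = _ := by rw [hfu]
      have h1' : -(f * ⟪b y, gradient u y⟫) ≤ M₁ * f ^ 2 * q := by
        refine le_trans ?_ h1
        nlinarith [neg_le_abs ⟪b y, gradient u y⟫]
      have h2 : |c y| * f ≤ M₂ * q * f + MV * f ^ 2 := by
        calc _ ≤ (M₂ * q + MV * |u y|) * f := by gcongr; exact hc y hy
          _ = M₂ * q * f + MV * (f * |u y|) := by ring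
          _ = _ := by rw [hfu]
      have h2' : c y * f ≤ M₂ * q * f + MV * f ^ 2 := by
        refine le_trans ?_ h2
        nlinarith [le_abs_self (c y)]
      have h3 : -(f * ⟪b y, gradient u y⟫) * (3 * f) ≤ M₁ * f ^ 2 * q * (3 * f) := by gcongr
      have h4 : c y * f * f ^ 2 ≤ (M₂ * q * f + MV * f ^ 2) * f ^ 2 := by gcongr
      have am : f ^ 2 * (f * q) ≤ 2 * ε * (f * q) ^ 2 + 1 / (8 * ε) * (f ^ 2) ^ 2 := by
        have := sq_nonneg (4 * ε * (f * q) - f ^ 2)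
        rw [← sub_nonneg]
        have e : 2 * ε * (f * q) ^ 2 + 1 / (8 * ε) * (f ^ 2) ^ 2 - f ^ 2 * (f * q)
          = 1 / (8 * ε) * (4 * ε * (f * q) - f ^ 2) ^ 2 := by field_simp; ring
        rw [e]; positivity
      have am' := mul_le_mul_of_nonneg_left am hk0
      have e5 : k / (8 * ε) = k * (1 / (8 * ε)) := by ring
      rw [e5]
      have e6 : k * (f ^ 2 * (f * q)) = 3 * M₁ * f ^ 3 * q + M₂ * f ^ 3 * q := by rw [hk]; ring
      nlinarith
    · have h1 : g y = 0 := by rw [hg, indicator_of_notMem hy]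
      have h2 : v y = 0 := by rw [hv, indicator_of_notMem hy]
      rw [grad_zero_off g fun h => hy (gs h), grad_zero_off v fun h => hy (vs h), h1, h2]
      simp
  have hgL : MemLp g 2 := gd.continuous.memLp_of_hasCompactSupport gc
  have hi1 : Integrable fun y => g y ^ 2 := by
    simpa using hgL.integrable_norm_pow (p := 2) (by norm_num)
  have hi2 : Integrable fun y => ‖gradient g y‖ ^ 2 :=
    g2.integrable_norm_pow (p := 2) (by norm_num)
  have hle := integral_mono ((hi2.const_mul (3 / 4 - k * ε / 2)).sub
    (hi1.const_mul (k / (8 * ε) + MV))) ei.neg hpw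
  simp only [Pi.sub_apply, Pi.neg_apply] at hle
  rw [integral_neg, e0, integral_sub (hi2.const_mul _) (hi1.const_mul _), integral_const_mul,
    integral_const_mul] at hle
  set D := ∫ y, ‖gradient g y‖ ^ 2 with hD
  set I := ∫ y, g y ^ 2 with hI
  have hD0 : 0 ≤ D := integral_nonneg fun y => by positivity
  have hI0 : 0 ≤ I := integral_nonneg fun y => by positivity
  have h1 : (k / (8 * ε) + MV) * I ≤ (k / (8 * ε) + MV) * (4 * ε ^ 2 * D) := by gcongr
  have h2 : (k / (8 * ε) + MV) * (4 * ε ^ 2 * D) = (k * ε / 2 + 4 * MV * ε ^ 2) * D := by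
    field_simp; ring
  have hD' : D = 0 := by
    refine le_antisymm ?_ hD0
    nlinarith
  have hI' : I = 0 := by
    rw [hD', mul_zero] at hpo; exact le_antisymm hpo hI0
  intro y hy
  by_contra hneg
  push Not at hneg
  have hgy : g y ≠ 0 := by
    rw [hg, indicator_of_mem hy, max_eq_left (by linarith)]
    have : (0 - u y) ≠ 0 := by linarith
    positivity
  have hc2 : HasCompactSupport fun y => g y ^ 2 := by
    have : (fun y => g y ^ 2) = fun y => g y * g y := by ext; ring
    rw [this]; exact gc.mul_right
  have := Continuous.integral_pos_of_hasCompactSupport_nonneg_nonzero (μ := volume)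
    (gd.continuous.pow 2) hc2 (fun y => sq_nonneg (g y)) (x := y) (by simpa using hgy)
  change 0 < I at this
  linarith


lemma H_exists (β τ : ℝ) (hβ : 0 < β) (hτ : 0 < τ) :
    ∃ H : ℝ → ℝ, (∀ s, β ≤ s → H s = 0) ∧ (∀ s, 0 ≤ H s) ∧
      (∀ s, 0 ≤ s → HasDerivAt H (-(max (β - s) 0 / (s + τ))) s) ∧
      (∀ s, 0 ≤ s → s ≤ β / 2 → β / 2 * (Real.log (β / 2) - Real.log (s + τ)) ≤ H s) := by
  let k : ℝ → ℝ := fun t => max (β - t) 0 / (max t 0 + τ)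
  have hden : ∀ t : ℝ, 0 < max t 0 + τ := fun t => by
    have := le_max_right t 0; linarith
  have hk : Continuous k := by
    refine Continuous.div (by fun_prop) (by fun_prop) fun t => (hden t).ne'
  have hk0 : ∀ t, 0 ≤ k t := fun t => div_nonneg (le_max_right _ _) (hden t).le
  let H : ℝ → ℝ := fun s => ∫ t in s..β, k t
  have H0 : ∀ s, β ≤ s → H s = 0 := by
    intro s hs
    have : H s = ∫ t in s..β, (0:ℝ) := by
      refine intervalIntegral.integral_congr fun t ht => ?_
      rw [uIcc_of_ge hs] at ht
      simp only [k]
      rw [max_eq_right (by linarith [ht.1])]; simp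
    rw [this]; simp
  refine ⟨H, H0, ?_, ?_, ?_⟩
  · intro s
    rcases le_total β s with h | h
    · rw [H0 s h]
    · exact intervalIntegral.integral_nonneg h fun t _ => hk0 t
  · intro s hs
    have := intervalIntegral.integral_hasDerivAt_left (hk.intervalIntegrable s β)
      hk.stronglyMeasurable.stronglyMeasurableAtFilter hk.continuousAt
    simpa [k, max_eq_left hs] using this
  · intro s hs hs2
    have hsplit : H s = (∫ t in s..(β / 2), k t) + ∫ t in (β / 2)..β, k t :=
      (intervalIntegral.integral_add_adjacent_intervals (hk.intervalIntegrable _ _)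
        (hk.intervalIntegrable _ _)).symm
    have h2 : 0 ≤ ∫ t in (β / 2)..β, k t :=
      intervalIntegral.integral_nonneg (by linarith) fun t _ => hk0 t
    have hcont : ContinuousOn (fun t : ℝ => β / 2 * (1 / (t + τ))) (uIcc s (β / 2)) := by
      rw [uIcc_of_le hs2]
      refine continuousOn_const.mul (ContinuousOn.div continuousOn_const (by fun_prop) ?_)
      intro t ht; linarith [ht.1]
    have h3 : ∫ t in s..(β / 2), β / 2 * (1 / (t + τ)) =
        β / 2 * Real.log (β / 2 + τ) - β / 2 * Real.log (s + τ) := by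
      refine intervalIntegral.integral_eq_sub_of_hasDerivAt
        (f := fun t => β / 2 * Real.log (t + τ)) ?_ hcont.intervalIntegrable
      intro t ht
      rw [uIcc_of_le hs2] at ht
      have : HasDerivAt (fun t : ℝ => t + τ) 1 t := (hasDerivAt_id t).add_const τ
      exact (this.log (by linarith [ht.1])).const_mul _
    have h4 : ∫ t in s..(β / 2), β / 2 * (1 / (t + τ)) ≤ ∫ t in s..(β / 2), k t := by
      refine intervalIntegral.integral_mono_on hs2 hcont.intervalIntegrable
        (hk.intervalIntegrable _ _) fun t ht => ?_
      have ht0 : 0 ≤ t := hs.trans ht.1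
      simp only [k]
      rw [max_eq_left ht0, mul_one_div, max_eq_left (by linarith [ht.2])]
      gcongr
      linarith [ht.2]
    have h5 : Real.log (β / 2) ≤ Real.log (β / 2 + τ) :=
      Real.log_le_log (by positivity) (by linarith)
    have h6 : β / 2 * Real.log (β / 2) ≤ β / 2 * Real.log (β / 2 + τ) := by gcongr
    rw [hsplit]
    linarith

lemma pw_log (g b : V2) (s β τ M₁ M₂ MV c : ℝ) (hs : 0 ≤ s) (hβ : 0 < β) (hβ1 : β ≤ 1)
    (hτ : 0 < τ) (hτ1 : τ ≤ 1) (hM₁ : 0 ≤ M₁) (hM₂ : 0 ≤ M₂) (hMV : 0 ≤ MV)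
    (hb : ‖b‖ ≤ M₁ * |s|) (hc : |c| ≤ M₂ * ‖g‖ + MV * |s|) :
    1 / 2 * (max (β - s) 0 / (s + τ) * ‖g‖) ^ 2 ≤
      -(⟪g + b, ((-(2 * max (β - s) 0) * (s + τ) - max (β - s) 0 ^ 2) / (s + τ) ^ 2) • g⟫
        + c * (max (β - s) 0 ^ 2 / (s + τ))) + (1 / 2 * (5 * M₁ + M₂) ^ 2 + MV) := by
  have hσ : 0 < s + τ := by linarith
  rw [abs_of_nonneg hs] at hb hc
  rcases le_total β s with h | h
  · rw [max_eq_right (by linarith)]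
    simp; positivity
  rw [max_eq_left (by linarith)]
  set P := β - s with hP
  set σ := s + τ with hσd
  have hP0 : 0 ≤ P := by linarith
  have hP1 : P ≤ 1 := by linarith
  have hσ2 : σ ≤ 2 := by linarith
  have hg := norm_nonneg g
  set X := P / σ * ‖g‖ with hX
  have hX0 : 0 ≤ X := by positivity
  set D := 2 * P / σ + (P / σ) ^ 2 with hD
  have hD0 : 0 ≤ D := by positivity
  have eD : (-(2 * P) * σ - P ^ 2) / σ ^ 2 = -D := by rw [hD]; field_simp; ring
  rw [eD, inner_smul_right, inner_add_left, real_inner_self_eq_norm_sq]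
  have h1 : X ^ 2 ≤ D * ‖g‖ ^ 2 := by
    have : D * ‖g‖ ^ 2 = X ^ 2 + 2 * P / σ * ‖g‖ ^ 2 := by rw [hD, hX]; ring
    rw [this]; linarith [show 0 ≤ 2 * P / σ * ‖g‖ ^ 2 by positivity]
  have h2 : D * |⟪b, g⟫| ≤ 5 * M₁ * X := by
    calc D * |⟪b, g⟫| ≤ D * (M₁ * σ * ‖g‖) := by
          gcongr
          refine (abs_real_inner_le_norm _ _).trans ?_
          gcongr
          refine hb.trans ?_
          gcongr
          linarith
      _ = M₁ * (2 * σ + P) * X := by rw [hD, hX]; field_simp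
      _ ≤ M₁ * (2 * 2 + 1) * X := by gcongr
      _ = _ := by ring
  have h3 : |c| * (P ^ 2 / σ) ≤ M₂ * X + MV := by
    calc |c| * (P ^ 2 / σ) ≤ (M₂ * ‖g‖ + MV * σ) * (P ^ 2 / σ) := by
          gcongr
          refine hc.trans ?_
          gcongr
          linarith
      _ = M₂ * (P * X) + MV * P ^ 2 := by rw [hX]; field_simp
      _ ≤ M₂ * (1 * X) + MV * 1 ^ 2 := by gcongr
      _ = _ := by ring
  have h2' : -(D * ⟪b, g⟫) ≤ D * |⟪b, g⟫| := by
    nlinarith [neg_le_abs ⟪b, g⟫]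
  have h3' : c * (P ^ 2 / σ) ≤ |c| * (P ^ 2 / σ) := by
    gcongr; exact le_abs_self c
  nlinarith [sq_nonneg (X - (5 * M₁ + M₂))]

lemma w_exists (x : V2) (ε : ℝ) (u : V2 → ℝ)
    (huc : ContinuousOn u (closedBall x ε)) (hud : ∀ y ∈ ball x ε, DifferentiableAt ℝ u y)
    (hloc : ∀ K, IsCompact K → K ⊆ ball x ε → MemLp (gradient u) 2 (volume.restrict K))
    (M₁ M₂ MV : ℝ) (hM₁ : 0 ≤ M₁) (hM₂ : 0 ≤ M₂) (hMV : 0 ≤ MV)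
    (b : V2 → V2) (c : V2 → ℝ) (hb : ∀ y ∈ ball x ε, ‖b y‖ ≤ M₁ * |u y|)
    (hc : ∀ y ∈ ball x ε, |c y| ≤ M₂ * ‖gradient u y‖ + MV * |u y|)
    (htest : ∀ v, Differentiable ℝ v → HasCompactSupport v → tsupport v ⊆ ball x ε →
        MemLp (gradient v) 2 →
        Integrable (fun y => ⟪gradient u y + b y, gradient v y⟫ + c y * v y) ∧
        ∫ y, (⟪gradient u y + b y, gradient v y⟫ + c y * v y) = 0)
    (hnn : ∀ y ∈ ball x ε, 0 ≤ u y) (β : ℝ) (hβ : 0 < β) (hβ1 : β ≤ 1)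
    (hβu : ∀ y ∈ sphere x ε, β < u y) :
    ∃ E : ℝ, 0 ≤ E ∧ ∀ τ, 0 < τ → τ ≤ 1 → ∃ w : V2 → ℝ, Differentiable ℝ w ∧
      HasCompactSupport w ∧ tsupport w ⊆ ball x ε ∧ MemLp (gradient w) 2 ∧ (∀ y, 0 ≤ w y) ∧
      (∫ y, ‖gradient w y‖ ^ 2 ≤ E) ∧
      ∀ y ∈ ball x ε, u y ≤ β / 2 → β / 2 * (Real.log (β / 2) - Real.log (u y + τ)) ≤ w y := by
  set E0 := 1 / 2 * (5 * M₁ + M₂) ^ 2 + MV with hE0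
  have hE00 : 0 ≤ E0 := by positivity
  refine ⟨2 * (E0 * volume.real (ball x ε)), by positivity, fun τ hτ hτ1 => ?_⟩
  obtain ⟨H, H0, Hn, Hd, Hl⟩ := H_exists β τ hβ hτ
  have hP : ∀ y ∈ ball x ε, 0 ≤ max (β - u y) 0 ∧ max (β - u y) 0 ≤ 1 := fun y hy =>
    ⟨le_max_right _ _, max_le (by linarith [hnn y hy]) zero_le_one⟩
  obtain ⟨wd, wc, ws, w2, wg⟩ := phi_test x ε u huc hud hloc β hβu H
    (fun s => -(max (β - s) 0 / (s + τ))) (1 / τ) H0 (fun y hy => Hd _ (hnn y hy)) (by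
      intro y hy
      have h1 := hP y hy
      have h2 := hnn y hy
      rw [abs_neg, abs_of_nonneg (div_nonneg h1.1 (by linarith))]
      gcongr
      · exact h1.2
      · linarith)
  obtain ⟨vd, vc, vs, v2, vg⟩ := phi_test x ε u huc hud hloc β hβu
    (fun s => max (β - s) 0 ^ 2 / (s + τ))
    (fun s => (-(2 * max (β - s) 0) * (s + τ) - max (β - s) 0 ^ 2) / (s + τ) ^ 2)
    (2 / τ + 1 / τ ^ 2)
    (by intro s hs; rw [max_eq_right (by linarith)]; simp)
    (by
      intro y hy
      have h2 := hnn y hy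
      have := (hasDerivAt_P2 β (u y)).div ((hasDerivAt_id (u y)).add_const τ)
        (by simp only [id]; linarith)
      refine this.congr_deriv ?_
      simp)
    (by
      intro y hy
      obtain ⟨h1, h1'⟩ := hP y hy
      have h2 := hnn y hy
      have hσ : 0 < u y + τ := by linarith
      set P := max (β - u y) 0 with hPd
      have e : (-(2 * P) * (u y + τ) - P ^ 2) / (u y + τ) ^ 2
        = -(2 * P / (u y + τ) + P ^ 2 / (u y + τ) ^ 2) := by field_simp; ring
      rw [e, abs_neg, abs_of_nonneg (by positivity)]
      have hle : τ ≤ u y + τ := by linarith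
      have a1 : 2 * P / (u y + τ) ≤ 2 / τ := by gcongr; linarith
      have a2 : P ^ 2 / (u y + τ) ^ 2 ≤ 1 / τ ^ 2 := by
        gcongr
        nlinarith
      linarith)
  obtain ⟨ei, e0⟩ := htest _ vd vc vs v2
  set w := (ball x ε).indicator fun y => H (u y) with hw
  set v := (ball x ε).indicator fun y => max (β - u y) 0 ^ 2 / (u y + τ) with hv
  refine ⟨w, wd, wc, ws, w2, ?_, ?_, ?_⟩
  · intro y
    exact indicator_nonneg (fun y _ => Hn _) y
  · have hpw : ∀ y, 1 / 2 * ‖gradient w y‖ ^ 2 ≤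
        -(⟪gradient u y + b y, gradient v y⟫ + c y * v y)
          + (ball x ε).indicator (fun _ => E0) y := by
      intro y
      by_cases hy : y ∈ ball x ε
      · have hvy : v y = max (β - u y) 0 ^ 2 / (u y + τ) := by rw [hv, indicator_of_mem hy]
        rw [wg y hy, vg y hy, hvy, indicator_of_mem hy, norm_smul, norm_neg,
          Real.norm_of_nonneg (div_nonneg (hP y hy).1 (by linarith [hnn y hy]))]
        exact pw_log _ _ _ _ _ _ _ _ _ (hnn y hy) hβ hβ1 hτ hτ1 hM₁ hM₂ hMV (hb y hy) (hc y hy)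
      · have h2 : v y = 0 := by rw [hv, indicator_of_notMem hy]
        rw [grad_zero_off w fun h => hy (ws h), grad_zero_off v fun h => hy (vs h), h2,
          indicator_of_notMem hy]
        simp
    have hind : Integrable ((ball x ε).indicator (fun _ => E0)) :=
      (integrable_indicator_iff measurableSet_ball).2 (integrableOn_const (measure_ball_lt_top.ne))
    have hi2 : Integrable fun y => ‖gradient w y‖ ^ 2 :=
      w2.integrable_norm_pow (p := 2) (by norm_num)
    have ein : Integrable (fun y => -(⟪gradient u y + b y, gradient v y⟫ + c y * v y)) := ei.neg
    have hle := integral_mono (hi2.const_mul (1 / 2)) (ein.add hind) hpw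
    simp only [Pi.add_apply] at hle
    rw [integral_add ein hind, integral_neg, e0, integral_const_mul,
      integral_indicator_const _ measurableSet_ball] at hle
    simp only [smul_eq_mul] at hle
    linarith
  · intro y hy hy2
    rw [hw, indicator_of_mem hy]
    exact Hl _ (hnn y hy) hy2


lemma rho_int (p : V2) (R r : ℝ) (hr : 0 < r) :
    IntegrableOn (fun y => (‖y - p‖ ^ 2 + r ^ 2)⁻¹) (ball p R) := by
  have hc : Continuous fun y : V2 => (‖y - p‖ ^ 2 + r ^ 2)⁻¹ :=
    Continuous.inv₀ (by fun_prop) fun y => by positivity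
  exact (hc.continuousOn.integrableOn_compact (isCompact_closedBall p R)).mono_set
    ball_subset_closedBall

lemma rho_integral (p : V2) (R r : ℝ) (hR : 0 < R) (hr : 0 < r) :
    ∫ y in ball p R, (‖y - p‖ ^ 2 + r ^ 2)⁻¹ =
      volume.real (ball (0 : V2) 1) * Real.log ((R ^ 2 + r ^ 2) / r ^ 2) := by
  let f : ℝ → ℝ := (Iio R).indicator fun t => (t ^ 2 + r ^ 2)⁻¹
  have h1 : ∫ y in ball p R, (‖y - p‖ ^ 2 + r ^ 2)⁻¹ = ∫ y : V2, f ‖y - p‖ := by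
    rw [← integral_indicator measurableSet_ball]
    refine integral_congr_ae (Eventually.of_forall fun y => ?_)
    simp only [f, indicator, mem_ball, dist_eq_norm, mem_Iio]
  rw [h1, integral_sub_right_eq_self (fun y : V2 => f ‖y‖) p, integral_fun_norm_addHaar]
  have h2 : ∫ y in Ioi (0 : ℝ), y ^ (Module.finrank ℝ V2 - 1) • f y
      = ∫ y in (0 : ℝ)..R, y * (y ^ 2 + r ^ 2)⁻¹ := by
    rw [intervalIntegral.integral_of_le hR.le, integral_Ioc_eq_integral_Ioo]
    have : (fun y : ℝ => y ^ (Module.finrank ℝ V2 - 1) • f y)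
        = (Iio R).indicator fun y => y * (y ^ 2 + r ^ 2)⁻¹ := by
      ext y
      simp [f, indicator]
    rw [this, setIntegral_indicator measurableSet_Iio, Ioi_inter_Iio]
  have h3 : ∫ y in (0 : ℝ)..R, y * (y ^ 2 + r ^ 2)⁻¹
      = 1 / 2 * Real.log (R ^ 2 + r ^ 2) - 1 / 2 * Real.log (0 ^ 2 + r ^ 2) := by
    refine intervalIntegral.integral_eq_sub_of_hasDerivAt
      (f := fun y => 1 / 2 * Real.log (y ^ 2 + r ^ 2)) ?_ ?_
    · intro y _
      have : y ^ 2 + r ^ 2 ≠ 0 := by positivity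
      refine ((((hasDerivAt_pow 2 y).add_const (r ^ 2)).log this).const_mul (1 / 2)).congr_deriv ?_
      field_simp
      norm_num
    · refine Continuous.intervalIntegrable ?_ _ _
      exact continuous_id.mul (Continuous.inv₀ (by fun_prop) fun y => by positivity)
  rw [h2, h3, Real.log_div (by positivity) (by positivity)]
  simp
  ring

lemma div_field (p : V2) (r : ℝ) (hr : 0 < r) (i : Fin 2) :
    ContDiff ℝ (⊤ : ℕ∞) (fun y : V2 => ⟪EuclideanSpace.single i (1:ℝ), y - p⟫ * (‖y - p‖ ^ 2 + r ^ 2)⁻¹) ∧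
    ∀ y, fderiv ℝ (fun y : V2 => ⟪EuclideanSpace.single i (1:ℝ), y - p⟫ * (‖y - p‖ ^ 2 + r ^ 2)⁻¹) y
      (EuclideanSpace.single i (1:ℝ)) = (‖y - p‖ ^ 2 + r ^ 2)⁻¹
        - 2 * ((y - p) i) ^ 2 * ((‖y - p‖ ^ 2 + r ^ 2)⁻¹) ^ 2 := by
  constructor
  · refine ContDiff.mul (contDiff_const.inner ℝ (contDiff_id.sub contDiff_const)) ?_
    refine ContDiff.inv ?_ fun y => by positivity
    exact ((contDiff_id.sub contDiff_const).norm_sq ℝ).add contDiff_const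
  · intro y
    have h1 : HasFDerivAt (fun y : V2 => ⟪EuclideanSpace.single i (1:ℝ), y - p⟫)
        (innerSL ℝ (EuclideanSpace.single i (1:ℝ))) y :=
      (innerSL ℝ (EuclideanSpace.single i (1:ℝ))).hasFDerivAt.comp y
        ((hasFDerivAt_id (𝕜 := ℝ) y).sub_const p)
    have hne : ‖y - p‖ ^ 2 + r ^ 2 ≠ 0 := by positivity
    have h2 := ((hasFDerivAt_id (𝕜 := ℝ) y).sub_const p).norm_sq.add_const (r ^ 2)
    have h3 := (hasDerivAt_inv hne).comp_hasFDerivAt y h2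
    have h4 := h1.mul h3
    have h5 : HasFDerivAt (fun y : V2 => ⟪EuclideanSpace.single i (1:ℝ), y - p⟫ *
      (‖y - p‖ ^ 2 + r ^ 2)⁻¹) _ y := h4
    rw [h5.fderiv]
    simp [EuclideanSpace.inner_single_left, EuclideanSpace.inner_single_right]
    ring

lemma log_cap (x p : V2) (ε : ℝ) (hε : 0 < ε) (hp : p ∈ ball x ε) (w : V2 → ℝ)
    (hwd : Differentiable ℝ w) (hwc : HasCompactSupport w) (hws : tsupport w ⊆ ball x ε)
    (hw2 : MemLp (gradient w) 2) (hw0 : ∀ y, 0 ≤ w y) (E : ℝ)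
    (hE : ∫ y, ‖gradient w y‖ ^ 2 ≤ E) (r m l : ℝ) (hr : 0 < r) (hl : 0 < l)
    (hmw : ∀ y ∈ ball p r, m ≤ w y) :
    volume.real (ball (0 : V2) 1) / 2 * m ≤ l / 2 * E + 1 / (2 * l) *
      (volume.real (ball (0 : V2) 1) * Real.log (((2 * ε) ^ 2 + r ^ 2) / r ^ 2)) := by
  set ω := volume.real (ball (0 : V2) 1) with hω
  let ρ : V2 → ℝ := fun y => ‖y - p‖ ^ 2 + r ^ 2
  have hρ : ∀ y, 0 < ρ y := fun y => by positivity
  let a : Fin 2 → V2 := fun i => EuclideanSpace.single i (1:ℝ)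
  let Y : Fin 2 → V2 → ℝ := fun i y => ⟪a i, y - p⟫ * (ρ y)⁻¹
  have hY : ∀ i, ContDiff ℝ (⊤ : ℕ∞) (Y i) := fun i => (div_field p r hr i).1
  have hYd : ∀ i y, fderiv ℝ (Y i) y (a i) = (ρ y)⁻¹ - 2 * ((y - p) i) ^ 2 * ((ρ y)⁻¹) ^ 2 :=
    fun i => (div_field p r hr i).2
  have hk := fun i => ibp1 w (Y i) (a i) hwd hwc hw2 (hY i)
  have hi1 : ∀ i, Integrable fun y => w y * fderiv ℝ (Y i) y (a i) := fun i =>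
    (hwd.continuous.mul ((hY i).continuous_fderiv (by simp) |>.clm_apply
      continuous_const)).integrable_of_hasCompactSupport hwc.mul_right
  have hi2 : ∀ i, Integrable fun y => fderiv ℝ w y (a i) * Y i y := fun i => by
    refine (grad_inner_int w hwc hw2 (fun y => Y i y • a i)
      ((hY i).continuous.smul continuous_const)).congr (Eventually.of_forall fun y => ?_)
    simp only
    rw [inner_smul_right, inner_grad, mul_comm]
  have hn2 : ∀ z : V2, ‖z‖ ^ 2 = z 0 ^ 2 + z 1 ^ 2 := fun z => by
    rw [EuclideanSpace.real_norm_sq_eq]; simp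
  have hsum : ∫ y, (w y * fderiv ℝ (Y 0) y (a 0) + w y * fderiv ℝ (Y 1) y (a 1))
      = ∫ y, -(fderiv ℝ w y (a 0) * Y 0 y + fderiv ℝ w y (a 1) * Y 1 y) := by
    rw [integral_add (hi1 0) (hi1 1), integral_neg, integral_add (hi2 0) (hi2 1), hk, hk]
    ring
  have hdiv : ∀ y, w y * fderiv ℝ (Y 0) y (a 0) + w y * fderiv ℝ (Y 1) y (a 1)
      = w y * (2 * r ^ 2 / ρ y ^ 2) := by
    intro y
    rw [hYd, hYd]
    have := hn2 (y - p)
    have h0 := hρ y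
    have e : (y - p) 0 ^ 2 + (y - p) 1 ^ 2 = ρ y - r ^ 2 := by simp only [ρ]; linarith
    have : (ρ y)⁻¹ - 2 * ((y - p) 0) ^ 2 * ((ρ y)⁻¹) ^ 2 +
      ((ρ y)⁻¹ - 2 * ((y - p) 1) ^ 2 * ((ρ y)⁻¹) ^ 2) = 2 * r ^ 2 / ρ y ^ 2 := by
      have : (ρ y)⁻¹ - 2 * ((y - p) 0) ^ 2 * ((ρ y)⁻¹) ^ 2 +
        ((ρ y)⁻¹ - 2 * ((y - p) 1) ^ 2 * ((ρ y)⁻¹) ^ 2) = 2 * (ρ y)⁻¹ -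
          2 * ((y - p) 0 ^ 2 + (y - p) 1 ^ 2) * ((ρ y)⁻¹) ^ 2 := by ring
      rw [this, e]
      field_simp
      ring
    rw [← this]; ring
  have hvol : volume.real (ball p r) = r ^ 2 * ω := by
    rw [hω, Measure.real, Measure.real, Measure.addHaar_ball_of_pos _ p hr]
    simp [ENNReal.toReal_mul, ENNReal.toReal_ofReal (sq_nonneg r)]
  have hlow : ω / 2 * m ≤ ∫ y, (w y * fderiv ℝ (Y 0) y (a 0) + w y * fderiv ℝ (Y 1) y (a 1)) := by
    have hj : Integrable ((ball p r).indicator (fun _ => m * (1 / (2 * r ^ 2)))) :=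
      (integrable_indicator_iff measurableSet_ball).2 (integrableOn_const (measure_ball_lt_top.ne))
    have := integral_mono hj ((hi1 0).add (hi1 1)) (fun y => by
      simp only [Pi.add_apply]
      rw [hdiv]
      by_cases hy : y ∈ ball p r
      · rw [indicator_of_mem hy]
        refine mul_le_mul (hmw y hy) ?_ (by positivity) (hw0 y)
        have h1 : ‖y - p‖ < r := by rw [← dist_eq_norm]; exact hy
        have h2 : ρ y ≤ 2 * r ^ 2 := by
          simp only [ρ]; nlinarith [norm_nonneg (y - p)]
        have h0 := hρ y
        rw [div_le_div_iff₀ (by positivity) (by positivity)]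
        nlinarith
      · rw [indicator_of_notMem hy]
        exact mul_nonneg (hw0 y) (by positivity))
    rw [integral_indicator_const _ measurableSet_ball, hvol, smul_eq_mul] at this
    refine le_trans (le_of_eq ?_) this
    field_simp
  have hup : ∫ y, -(fderiv ℝ w y (a 0) * Y 0 y + fderiv ℝ w y (a 1) * Y 1 y) ≤
      l / 2 * E + 1 / (2 * l) * (ω * Real.log (((2 * ε) ^ 2 + r ^ 2) / r ^ 2)) := by
    have hii : Integrable fun y => ‖gradient w y‖ ^ 2 :=
      hw2.integrable_norm_pow (p := 2) (by norm_num)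
    have hjj : Integrable ((ball p (2 * ε)).indicator fun y => (‖y - p‖ ^ 2 + r ^ 2)⁻¹) :=
      (integrable_indicator_iff measurableSet_ball).2 (rho_int p (2 * ε) r hr)
    have hsub : ball x ε ⊆ ball p (2 * ε) := by
      intro y hy
      have := dist_triangle_right y p x
      rw [mem_ball] at hy hp ⊢; linarith
    have ineg : Integrable fun y => -(fderiv ℝ w y (a 0) * Y 0 y + fderiv ℝ w y (a 1) * Y 1 y) :=
      ((hi2 0).add (hi2 1)).neg
    have := integral_mono ineg ((hii.const_mul (l / 2)).add (hjj.const_mul (1 / (2 * l))))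
      (fun y => by
        simp only [Pi.add_apply]
        rw [← inner_grad, ← inner_grad]
        by_cases hy : y ∈ tsupport w
        · rw [indicator_of_mem (hsub (hws hy)), hn2 (gradient w y)]
          set g := gradient w y
          set z := y - p with hz
          have h0 := hρ y
          have hz2 : z 0 ^ 2 + z 1 ^ 2 ≤ ρ y := by
            rw [← hn2 z]; simp only [ρ]; nlinarith [sq_nonneg r]
          have e0 : ∀ i, ⟪g, a i⟫ = g i := fun i => by
            simp [a, EuclideanSpace.inner_single_right]
          have e1 : ∀ i, Y i y = z i * (ρ y)⁻¹ := fun i => by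
            simp [Y, a, EuclideanSpace.inner_single_left, hz]
          rw [e0, e0, e1, e1]
          change _ ≤ _ + 1 / (2 * l) * (ρ y)⁻¹
          set q := (ρ y)⁻¹ with hq
          have hq0 : 0 < q := inv_pos.2 h0
          have hq1 : (z 0 ^ 2 + z 1 ^ 2) * q ^ 2 ≤ q := by
            have : ρ y * q = 1 := mul_inv_cancel₀ h0.ne'
            calc (z 0 ^ 2 + z 1 ^ 2) * q ^ 2 ≤ ρ y * q ^ 2 := by gcongr
              _ = q := by rw [sq, ← mul_assoc, this, one_mul]
          have hs : ∀ i, -(g i * (z i * q)) ≤ l / 2 * g i ^ 2 + 1 / (2 * l) * (z i ^ 2 * q ^ 2) := by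
            intro i
            have : l / 2 * g i ^ 2 + 1 / (2 * l) * (z i ^ 2 * q ^ 2) + g i * (z i * q)
              = (l * g i + z i * q) ^ 2 / (2 * l) := by field_simp; ring
            have h2 : 0 ≤ (l * g i + z i * q) ^ 2 / (2 * l) := by positivity
            linarith
          have := hs 0
          have := hs 1
          have : 1 / (2 * l) * ((z 0 ^ 2 + z 1 ^ 2) * q ^ 2) ≤ 1 / (2 * l) * q := by gcongr
          linarith
        · rw [grad_zero_off w hy]
          simp only [inner_zero_left, zero_mul, add_zero, neg_zero, norm_zero]
          have : 0 ≤ (ball p (2 * ε)).indicator (fun y => (‖y - p‖ ^ 2 + r ^ 2)⁻¹) y :=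
            indicator_nonneg (fun y _ => by positivity) y
          positivity)
    refine this.trans ?_
    simp only [Pi.add_apply]
    rw [integral_add (hii.const_mul _) (hjj.const_mul _), integral_const_mul, integral_const_mul,
      integral_indicator measurableSet_ball, rho_integral p _ r (by linarith) hr]
    gcongr
  linarith

lemma no_zero (x : V2) (ε : ℝ) (hε : 0 < ε) (u : V2 → ℝ)
    (hud : ∀ y ∈ ball x ε, DifferentiableAt ℝ u y)
    (hnn : ∀ y ∈ ball x ε, 0 ≤ u y) (β : ℝ) (hβ : 0 < β)
    (hw : ∃ E : ℝ, 0 ≤ E ∧ ∀ τ, 0 < τ → τ ≤ 1 → ∃ w : V2 → ℝ, Differentiable ℝ w ∧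
      HasCompactSupport w ∧ tsupport w ⊆ ball x ε ∧ MemLp (gradient w) 2 ∧ (∀ y, 0 ≤ w y) ∧
      (∫ y, ‖gradient w y‖ ^ 2 ≤ E) ∧
      ∀ y ∈ ball x ε, u y ≤ β / 2 → β / 2 * (Real.log (β / 2) - Real.log (u y + τ)) ≤ w y)
    (p : V2) (hp : p ∈ ball x ε) : u p ≠ 0 := by
  intro h0
  obtain ⟨E, hE0, hw⟩ := hw
  set ω := volume.real (ball (0 : V2) 1) with hω
  have hω0 : 0 < ω := ENNReal.toReal_pos (measure_ball_pos _ _ one_pos).ne'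
    measure_ball_lt_top.ne
  obtain ⟨C, hC⟩ := (hud p hp).hasFDerivAt.isBigO_sub.bound
  obtain ⟨r₀, hr₀, hrb⟩ := Metric.eventually_nhds_iff.1 hC
  set L := max C 0 with hL
  have hL0 : 0 ≤ L := le_max_right _ _
  obtain ⟨r₁, hr₁, hsub⟩ := Metric.isOpen_ball.mem_nhds hp |> Metric.mem_nhds_iff.1
  set K := 4 / β * E + β / 16 * (ω * Real.log ((2 * ε) ^ 2 + 1))
    - ω / 2 * (β / 2 * (Real.log (β / 2) - Real.log (L + 1))) with hK
  have hev : ∀ᶠ r : ℝ in 𝓝[>] 0, (0 < r ∧ r < 1 ∧ r < r₀ ∧ r < r₁ ∧ L * r < β / 2) ∧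
      Real.log r < -(K / (ω * β / 8)) := by
    have hc : Tendsto (fun r : ℝ => L * r) (𝓝[>] 0) (𝓝 0) := by
      have : Tendsto (fun r : ℝ => L * r) (𝓝 0) (𝓝 (L * 0)) :=
        (continuous_const.mul continuous_id).tendsto 0
      rw [mul_zero] at this
      exact this.mono_left nhdsWithin_le_nhds
    have hid : Tendsto (fun r : ℝ => r) (𝓝[>] 0) (𝓝 0) := nhdsWithin_le_nhds
    filter_upwards [self_mem_nhdsWithin, hid.eventually_lt_const one_pos,
      hid.eventually_lt_const hr₀, hid.eventually_lt_const hr₁,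
      hc.eventually_lt_const (half_pos hβ),
      Real.tendsto_log_nhdsGT_zero.eventually_lt_atBot (-(K / (ω * β / 8)))]
      with r a1 a2 a3 a4 a5 a6
    exact ⟨⟨a1, a2, a3, a4, a5⟩, a6⟩
  obtain ⟨r, ⟨hr, hr1, hrr₀, hrr₁, hLr⟩, hlog⟩ := hev.exists
  obtain ⟨w, wd, wc, ws, w2, w0, wE, wl⟩ := hw r hr hr1.le
  have hmain := log_cap x p ε hε hp w wd wc ws w2 w0 E wE r
    (β / 2 * (Real.log (β / 2) - Real.log ((L + 1) * r))) (8 / β) hr (by positivity) (by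
      intro y hy
      have hyB : y ∈ ball x ε := hsub (ball_subset_ball hrr₁.le hy)
      have hyd : dist y p < r := hy
      have h1 := hrb (hyd.trans hrr₀)
      rw [h0, sub_zero, Real.norm_eq_abs, ← dist_eq_norm, abs_of_nonneg (hnn y hyB)] at h1
      have h2 : u y ≤ L * r := by
        refine h1.trans ?_
        gcongr
        exact le_max_left _ _
      refine le_trans ?_ (wl y hyB (by linarith))
      have h3 := hnn y hyB
      have : Real.log (u y + r) ≤ Real.log ((L + 1) * r) :=
        Real.log_le_log (by linarith) (by linarith)
      gcongr)
  rw [Real.log_mul (by positivity) hr.ne',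
    Real.log_div (x := (2 * ε) ^ 2 + r ^ 2) (y := r ^ 2) (by positivity) (by positivity),
    Real.log_pow] at hmain
  have h4 : Real.log ((2 * ε) ^ 2 + r ^ 2) ≤ Real.log ((2 * ε) ^ 2 + 1) := by
    apply Real.log_le_log (by positivity)
    nlinarith
  have h5 : β / 16 * (ω * Real.log ((2 * ε) ^ 2 + r ^ 2)) ≤
    β / 16 * (ω * Real.log ((2 * ε) ^ 2 + 1)) := by gcongr
  have e1 : 8 / β / 2 = 4 / β := by ring
  have e2 : 1 / (2 * (8 / β)) = β / 16 := by field_simp; norm_num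
  rw [e1, e2] at hmain
  have h6 : K < ω * β / 8 * (-Real.log r) := by
    rw [← div_lt_iff₀' (by positivity)]; linarith
  push_cast at hmain
  rw [hK] at h6
  rw [← hω] at hmain
  nlinarith


lemma stmt7_aux : ∃ c : ℝ, 0 < c ∧
    ∀ (δ : ℝ), 0 < δ → ∀ (ε : ℝ), 0 < ε →
    ∀ (x : V2) (W₁ W₂ : V2 → V2) (V : V2 → ℝ) (M₁ M₂ MV : ℝ),
      0 ≤ M₁ → 0 ≤ M₂ → 0 ≤ MV →
      (∀ y ∈ ball x ε, ‖W₁ y‖ ≤ M₁) → (∀ y ∈ ball x ε, ‖W₂ y‖ ≤ M₂) →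
      (∀ y ∈ ball x ε, |V y| ≤ MV) →
      ε + ε ^ (2/(2+δ)) * M₁ + ε * M₂ + ε^2 * MV ≤ c →
    ∀ u : V2 → ℝ, ContinuousOn u (closedBall x ε) →
      (∀ y ∈ ball x ε, DifferentiableAt ℝ u y) →
      IsWeakSol (ball x ε) W₁ W₂ V u →
      (∀ y ∈ sphere x ε, 0 < u y) →
      ∀ y ∈ ball x ε, 0 < u y := by
  refine ⟨1 / 8, by norm_num, ?_⟩
  intro δ hδ ε hε x W₁ W₂ V M₁ M₂ MV hM₁ hM₂ hMV hW₁ hW₂ hV hsm u huc hud hw hpos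
  have n1 : 0 ≤ ε ^ (2 / (2 + δ)) * M₁ := by positivity
  have n2 : 0 ≤ ε * M₂ := by positivity
  have n3 : 0 ≤ ε ^ 2 * MV := by positivity
  have hε1 : ε ≤ 1 := by linarith
  have hexp : ε ≤ ε ^ (2 / (2 + δ)) := by
    have := Real.rpow_le_rpow_of_exponent_ge hε hε1
      (show 2 / (2 + δ) ≤ 1 by rw [div_le_one (by linarith)]; linarith)
    rwa [Real.rpow_one] at this
  have hexp2 : ε * M₁ ≤ ε ^ (2 / (2 + δ)) * M₁ := by gcongr
  have hsm2 : (3 * M₁ + M₂) * ε + 4 * MV * ε ^ 2 ≤ 1 / 2 := by linarith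
  have hloc := loc_L2 (ball x ε) isOpen_ball W₁ W₂ V u M₁ M₂ MV hM₁ hM₂ hMV hW₁ hW₂ hV hud hw
  obtain ⟨b, c, hb, hc, htest⟩ := test_all (ball x ε) (ball x ε) isOpen_ball isOpen_ball
    Subset.rfl W₁ W₂ V u M₁ M₂ MV hM₁ hM₂ hMV hW₁ hW₂ hV (huc.mono ball_subset_closedBall) hloc hw
  have hnn := u_nonneg x ε hε u huc hud hloc M₁ M₂ MV hM₁ hM₂ hMV hsm2 b c hb hc htest hpos
  obtain ⟨β, hβ, hβ1, hβu⟩ : ∃ β : ℝ, 0 < β ∧ β ≤ 1 ∧ ∀ y ∈ sphere x ε, β < u y := by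
    rcases (sphere x ε).eq_empty_or_nonempty with h | h
    · exact ⟨1, one_pos, le_rfl, by simp [h]⟩
    · obtain ⟨z, hz, hmin⟩ := (isCompact_sphere x ε).exists_isMinOn h
        (huc.mono sphere_subset_closedBall)
      have hz0 := hpos z hz
      refine ⟨min 1 (u z / 2), lt_min one_pos (by linarith), min_le_left _ _, fun y hy => ?_⟩
      have h1 : u z ≤ u y := hmin hy
      linarith [min_le_right 1 (u z / 2)]
  have hwex := w_exists x ε u huc hud hloc M₁ M₂ MV hM₁ hM₂ hMV b c hb hc htest hnn β hβ hβ1 hβu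
  intro y hy
  exact lt_of_le_of_ne (hnn y hy) (no_zero x ε hε u hud hnn β hβ hwex y hy).symm

end Helpers

/-- Maximum principle on small balls: a weak solution of the elliptic equation on
`B(x,ε)`, continuous up to the boundary and positive on `∂B(x,ε)`, is positive in
`B(x,ε)`, under the smallness condition on `ε`. -/
theorem stmt7 : ∃ c : ℝ, 0 < c ∧
    ∀ (δ : ℝ), 0 < δ → ∀ (ε : ℝ), 0 < ε →
    ∀ (x : V2) (W₁ W₂ : V2 → V2) (V : V2 → ℝ) (M₁ M₂ MV : ℝ),
      0 ≤ M₁ → 0 ≤ M₂ → 0 ≤ MV →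
      (∀ y ∈ ball x ε, ‖W₁ y‖ ≤ M₁) → (∀ y ∈ ball x ε, ‖W₂ y‖ ≤ M₂) →
      (∀ y ∈ ball x ε, |V y| ≤ MV) →
      ε + ε ^ (2/(2+δ)) * M₁ + ε * M₂ + ε^2 * MV ≤ c →
    ∀ u : V2 → ℝ, ContinuousOn u (closedBall x ε) →
      (∀ y ∈ ball x ε, DifferentiableAt ℝ u y) →
      IsWeakSol (ball x ε) W₁ W₂ V u →
      (∀ y ∈ sphere x ε, 0 < u y) →
      ∀ y ∈ ball x ε, 0 < u y := by
  exact stmt7_aux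
end
end

section
/- Carleman-type estimate in a set with small Poincaré constant: For every ε > 0 and C′ ≥ 1 there exists C > 0 independent of ε such that for every bounded open Ω ⊂ ℝ² with C_P(Ω) ≤ C′ε, every s ≥ 1, every φ ∈ C^∞(Ω;ℝ) with −Δφ ≥ s on Ω, and every u ∈ H²₀(Ω;ℝ): ε^{−4}∫_Ω e^{−φ}|u|² + s²∫_Ω e^{−φ}|u|² + ε^{−2}∫_Ω e^{−φ}|∇u|² + s∫_Ω e^{−φ}|∇u|² ≤ C∫_Ω e^{−φ}|Δu|². -/
open MeasureTheory Metric
open scoped RealInnerProductSpace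

noncomputable section

/-- The Laplacian `Δf = ∑ᵢ ∂²f/∂xᵢ²` on `ℝ²`. -/
def lap (f : V2 → ℝ) (x : V2) : ℝ :=
  ∑ i : Fin 2,
    fderiv ℝ (fun y => fderiv ℝ f y (EuclideanSpace.single i (1:ℝ))) x
      (EuclideanSpace.single i (1:ℝ))


/-- Directional derivative along the `i`-th coordinate. -/
def dd (i : Fin 2) (f : V2 → ℝ) (x : V2) : ℝ := fderiv ℝ f x (EuclideanSpace.single i (1:ℝ))

/-- Smooth functions vanishing off `K`. -/
def SK (K : Set V2) (f : V2 → ℝ) : Prop :=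
  ContDiff ℝ (⊤ : ℕ∞) f ∧ ∀ x, x ∉ K → f x = 0

lemma lap_eq (f : V2 → ℝ) (x : V2) : lap f x = dd 0 (dd 0 f) x + dd 1 (dd 1 f) x := by
  simp only [lap, Fin.sum_univ_two]; rfl

lemma norm_gradient_sq (f : V2 → ℝ) (x : V2) :
    ‖gradient f x‖^2 = (dd 0 f x)^2 + (dd 1 f x)^2 := by
  have h : ∀ i, (gradient f x) i = dd i f x := by
    intro i
    have h1 : ⟪gradient f x, EuclideanSpace.single i (1:ℝ)⟫ = dd i f x := by
      rw [gradient, InnerProductSpace.toDual_symm_apply]; rfl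
    rw [← h1, EuclideanSpace.inner_single_right]
    simp
  rw [EuclideanSpace.norm_sq_eq]
  simp [Fin.sum_univ_two, h]

lemma contDiff_dd {f : V2 → ℝ} (hf : ContDiff ℝ (⊤ : ℕ∞) f) (i : Fin 2) :
    ContDiff ℝ (⊤ : ℕ∞) (dd i f) := by
  unfold dd
  exact (hf.fderiv_right (m := (⊤ : ℕ∞)) (by simp)).clm_apply contDiff_const

lemma dd_zero_off {K : Set V2} (hK : IsClosed K) {f : V2 → ℝ} (hf : ∀ x, x ∉ K → f x = 0)
    (i : Fin 2) : ∀ x, x ∉ K → dd i f x = 0 := by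
  intro x hx
  have h : f =ᶠ[nhds x] fun _ => (0:ℝ) := by
    filter_upwards [hK.isOpen_compl.mem_nhds hx] with y hy using hf y hy
  unfold dd
  rw [h.fderiv_eq]; simp

lemma SK.dd {K : Set V2} (hK : IsClosed K) {f : V2 → ℝ} (hf : SK K f) (i : Fin 2) :
    SK K (dd i f) := ⟨contDiff_dd hf.1 i, dd_zero_off hK hf.2 i⟩

lemma integrable_of_off {K : Set V2} (hK : IsCompact K) {f : V2 → ℝ} (hc : Continuous f)
    (hf : ∀ x, x ∉ K → f x = 0) : Integrable f :=
  hc.integrable_of_hasCompactSupport (HasCompactSupport.intro hK hf)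

lemma integral_dd {K : Set V2} (hK : IsCompact K) {f : V2 → ℝ} (hf : SK K f) (i : Fin 2) :
    ∫ x, dd i f x = 0 := by
  have h := integral_mul_fderiv_eq_neg_fderiv_mul_of_integrable (μ := (volume : Measure V2))
    (f := fun _ : V2 => (1:ℝ)) (g := f) (v := EuclideanSpace.single i (1:ℝ))
    (by simp) (by
      simp only [one_mul]
      exact integrable_of_off hK (hf.dd hK.isClosed i).1.continuous
        (hf.dd hK.isClosed i).2)
    (by simpa using integrable_of_off hK hf.1.continuous hf.2)
    (fun x _ => by fun_prop) (fun x _ => hf.1.differentiable (by simp) x)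
  simpa [dd] using h

section rules
variable {f g : V2 → ℝ} {x : V2}

lemma dd_mul (i : Fin 2) (hf : ContDiff ℝ (⊤ : ℕ∞) f) (hg : ContDiff ℝ (⊤ : ℕ∞) g) :
    dd i (fun y => f y * g y) x = f x * dd i g x + g x * dd i f x := by
  unfold dd
  rw [fderiv_fun_mul (hf.differentiable (by simp) x) (hg.differentiable (by simp) x)]
  simp

lemma dd_add (i : Fin 2) (hf : ContDiff ℝ (⊤ : ℕ∞) f) (hg : ContDiff ℝ (⊤ : ℕ∞) g) :
    dd i (fun y => f y + g y) x = dd i f x + dd i g x := by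
  unfold dd
  rw [fderiv_fun_add (hf.differentiable (by simp) x) (hg.differentiable (by simp) x)]
  simp

lemma dd_const_mul (i : Fin 2) (c : ℝ) (hf : ContDiff ℝ (⊤ : ℕ∞) f) :
    dd i (fun y => c * f y) x = c * dd i f x := by
  rw [dd_mul i contDiff_const hf]
  simp [dd]

lemma dd_exp (i : Fin 2) (hf : ContDiff ℝ (⊤ : ℕ∞) f) :
    dd i (fun y => Real.exp (f y)) x = Real.exp (f x) * dd i f x := by
  unfold dd
  rw [fderiv_exp (hf.differentiable (by simp) x)]
  simp

lemma dd_comm (hf : ContDiff ℝ (⊤ : ℕ∞) f) (i j : Fin 2) :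
    dd i (dd j f) x = dd j (dd i f) x := by
  have h : IsSymmSndFDerivAt ℝ f x := by
    apply ContDiffAt.isSymmSndFDerivAt (n := (⊤ : ℕ∞)) hf.contDiffAt
    rw [minSmoothness_of_isRCLikeNormedField]
    exact WithTop.coe_le_coe.2 (le_top : (2 : ℕ∞) ≤ ⊤)
  have hd : DifferentiableAt ℝ (fderiv ℝ f) x :=
    (hf.fderiv_right (m := (⊤ : ℕ∞)) (by simp)).differentiable (by simp) x
  have e : ∀ i j, dd i (dd j f) x = fderiv ℝ (fderiv ℝ f) x (EuclideanSpace.single i (1:ℝ))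
      (EuclideanSpace.single j (1:ℝ)) := by
    intro i j
    unfold dd
    rw [fderiv_clm_apply hd (by fun_prop)]
    simp
  rw [e, e, h]
end rules

/-- The regularised modulus. -/
lemma dd_reg {f : V2 → ℝ} {δ : ℝ} (i : Fin 2) (hf : ContDiff ℝ (⊤ : ℕ∞) f) (x : V2)
    (hpos : 0 < f x) :
    dd i (fun y => Real.sqrt (f y) - δ) x = dd i f x / (2 * Real.sqrt (f x)) := by
  unfold dd
  rw [fderiv_sub_const, fderiv_sqrt (hf.differentiable (by simp) x) hpos.ne']
  simp; ring

/-- The basic commutator identity and the two consequences. -/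
lemma key_ab {K Ω : Set V2} (hK : IsCompact K) (hKΩ : K ⊆ Ω) {ψ a b : V2 → ℝ}
    (hψ : ContDiff ℝ (⊤ : ℕ∞) ψ) (ha : SK K a) (hb : SK K b) {s L : ℝ} (hs : 0 ≤ s) (hL : 0 ≤ L)
    (hsψ : ∀ x ∈ K, s ≤ 2 * lap ψ x)
    (hP : ∀ v, H10c Ω v → (∫ x in Ω, (v x)^2) ≤ L * ∫ x in Ω, ‖gradient v x‖^2) :
    let N := ∫ x, ((dd 0 a x - dd 1 b x - dd 0 ψ x * a x + dd 1 ψ x * b x)^2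
      + (dd 1 a x + dd 0 b x - dd 0 ψ x * b x - dd 1 ψ x * a x)^2)
    s * (∫ x, (a x ^2 + b x^2)) ≤ N ∧ (∫ x, (a x ^2 + b x^2)) ≤ L * N := by
  intro N
  have hKc := hK.isClosed
  have ha0 := ha.dd hKc 0
  have ha1 := ha.dd hKc 1
  have hb0 := hb.dd hKc 0
  have hb1 := hb.dd hKc 1
  have hψ0 := contDiff_dd hψ 0
  have hψ1 := contDiff_dd hψ 1
  have hψ00 := contDiff_dd hψ0 0
  have hψ11 := contDiff_dd hψ1 1
  have cont : Continuous a ∧ Continuous b ∧ Continuous (dd 0 a) ∧ Continuous (dd 1 a) ∧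
    Continuous (dd 0 b) ∧ Continuous (dd 1 b) ∧ Continuous (dd 0 ψ) ∧ Continuous (dd 1 ψ) ∧
    Continuous (dd 0 (dd 0 ψ)) ∧ Continuous (dd 1 (dd 1 ψ)) :=
    ⟨ha.1.continuous, hb.1.continuous, ha0.1.continuous, ha1.1.continuous, hb0.1.continuous,
      hb1.1.continuous, hψ0.continuous, hψ1.continuous, hψ00.continuous, hψ11.continuous⟩
  obtain ⟨ca, cb, ca0, ca1, cb0, cb1, cψ0, cψ1, cψ00, cψ11⟩ := cont
  let A : V2 → ℝ := fun x => (dd 0 a x - dd 1 b x - dd 0 ψ x * a x + dd 1 ψ x * b x)^2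
      + (dd 1 a x + dd 0 b x - dd 0 ψ x * b x - dd 1 ψ x * a x)^2
  let B : V2 → ℝ := fun x => (dd 0 a x + dd 1 b x + dd 0 ψ x * a x + dd 1 ψ x * b x)^2
      + (dd 0 b x - dd 1 a x + dd 0 ψ x * b x - dd 1 ψ x * a x)^2
  let R : V2 → ℝ := fun x => a x^2 + b x^2
  let T : V2 → ℝ := fun x => 2 * lap ψ x * R x
  have cA : Continuous A := by simp only [A]; fun_prop
  have cB : Continuous B := by simp only [B]; fun_prop
  have cR : Continuous R := by simp only [R]; fun_prop
  have cT : Continuous T := by simp only [T, R, lap_eq]; fun_prop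
  have zA : ∀ x, x ∉ K → A x = 0 := by
    intro x hx
    simp [A, ha.2 x hx, hb.2 x hx, ha0.2 x hx, ha1.2 x hx, hb0.2 x hx, hb1.2 x hx]
  have zB : ∀ x, x ∉ K → B x = 0 := by
    intro x hx
    simp [B, ha.2 x hx, hb.2 x hx, ha0.2 x hx, ha1.2 x hx, hb0.2 x hx, hb1.2 x hx]
  have zR : ∀ x, x ∉ K → R x = 0 := by
    intro x hx
    simp [R, ha.2 x hx, hb.2 x hx]
  have zT : ∀ x, x ∉ K → T x = 0 := by
    intro x hx
    simp [T, zR x hx]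
  have iA := integrable_of_off hK cA zA
  have iB := integrable_of_off hK cB zB
  have iR := integrable_of_off hK cR zR
  have iT := integrable_of_off hK cT zT
  -- the vector field
  have cda : ContDiff ℝ (⊤ : ℕ∞) R := (ha.1.pow 2).add (hb.1.pow 2)
  have hX : SK K (fun x => (-4) * (a x * dd 1 b x) + (-2) * (R x * dd 0 ψ x)) :=
    ⟨(contDiff_const.mul (ha.1.mul hb1.1)).add (contDiff_const.mul (cda.mul hψ0)), fun x hx => by
      simp [ha.2 x hx, zR x hx]⟩
  have hY : SK K (fun x => 4 * (a x * dd 0 b x) + (-2) * (R x * dd 1 ψ x)) :=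
    ⟨(contDiff_const.mul (ha.1.mul hb0.1)).add (contDiff_const.mul (cda.mul hψ1)), fun x hx => by
      simp [ha.2 x hx, zR x hx]⟩
  have dR : ∀ i x, dd i R x = 2 * (a x * dd i a x) + 2 * (b x * dd i b x) := by
    intro i x
    have : R = fun x => a x * a x + b x * b x := by funext x; simp only [R]; ring
    rw [this, dd_add i (ha.1.mul ha.1) (hb.1.mul hb.1), dd_mul i ha.1 ha.1, dd_mul i hb.1 hb.1]
    ring
  have pw : ∀ x, A x - B x - T x =
      dd 0 (fun x => (-4) * (a x * dd 1 b x) + (-2) * (R x * dd 0 ψ x)) x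
      + dd 1 (fun x => 4 * (a x * dd 0 b x) + (-2) * (R x * dd 1 ψ x)) x := by
    intro x
    rw [dd_add 0 (contDiff_const.mul (ha.1.mul hb1.1)) (contDiff_const.mul (cda.mul hψ0)),
      dd_add 1 (contDiff_const.mul (ha.1.mul hb0.1)) (contDiff_const.mul (cda.mul hψ1)),
      dd_const_mul 0 _ (ha.1.mul hb1.1), dd_const_mul 0 _ (cda.mul hψ0),
      dd_const_mul 1 _ (ha.1.mul hb0.1), dd_const_mul 1 _ (cda.mul hψ1),
      dd_mul 0 ha.1 hb1.1, dd_mul 0 cda hψ0, dd_mul 1 ha.1 hb0.1, dd_mul 1 cda hψ1, dR, dR,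
      dd_comm hb.1 0 1]
    simp only [A, B, T, R, lap_eq]
    ring
  have hid : (∫ x, A x) - (∫ x, B x) - (∫ x, T x) = 0 := by
    rw [← integral_sub iA iB, ← integral_sub (f := fun x => A x - B x) (iA.sub iB) iT]
    simp_rw [pw]
    rw [integral_add (integrable_of_off hK (hX.dd hKc 0).1.continuous (hX.dd hKc 0).2)
      (integrable_of_off hK (hY.dd hKc 1).1.continuous (hY.dd hKc 1).2),
      integral_dd hK hX, integral_dd hK hY, add_zero]
  have hB0 : 0 ≤ ∫ x, B x := integral_nonneg fun x => by simp only [B]; positivity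
  have hTR : s * (∫ x, R x) ≤ ∫ x, T x := by
    rw [← integral_const_mul]
    refine integral_mono (iR.const_mul s) iT fun x => ?_
    by_cases hx : x ∈ K
    · exact mul_le_mul_of_nonneg_right (hsψ x hx) (by simp only [R]; positivity)
    · simp [T, zR x hx]
  have hR0 : 0 ≤ ∫ x, R x := integral_nonneg fun x => by simp only [R]; positivity
  have hsR := mul_nonneg hs hR0
  have hN : N = ∫ x, A x := rfl
  refine ⟨?_, ?_⟩
  · change s * (∫ x, R x) ≤ N
    linarith
  change (∫ x, R x) ≤ L * N
  have hBA : (∫ x, B x) ≤ ∫ x, A x := by linarith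
  have cS : Continuous fun x => Real.sqrt (R x) := cR.sqrt
  have iS := integrable_of_off hK cS fun x hx => by simp [zR x hx]
  have step : ∀ δ : ℝ, 0 < δ → (∫ x, R x) - 2 * δ * (∫ x, Real.sqrt (R x)) ≤ L * N := by
    intro δ hδ
    have hpos : ∀ x, 0 < R x + δ^2 := fun x => by simp only [R]; positivity
    let ρ : V2 → ℝ := fun x => Real.sqrt (R x + δ^2) - δ
    have cd : ContDiff ℝ (⊤ : ℕ∞) (fun x => R x + δ^2) := cda.add contDiff_const
    have hρ : SK K ρ := ⟨(cd.sqrt fun x => (hpos x).ne').sub contDiff_const, fun x hx => by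
      simp [ρ, zR x hx, Real.sqrt_sq hδ.le]⟩
    have hts : tsupport ρ ⊆ K := closure_minimal (fun x hx => by
      by_contra h; exact hx (hρ.2 x h)) hKc
    have hH : H10c Ω ρ := ⟨hρ.1, HasCompactSupport.intro hK hρ.2, hts.trans hKΩ⟩
    have h1 := hP ρ hH
    simp only [norm_gradient_sq] at h1
    have hρ0 := hρ.dd hKc 0
    have hρ1 := hρ.dd hKc 1
    rw [setIntegral_eq_integral_of_forall_compl_eq_zero
        (fun x hx => by rw [hρ.2 x fun h => hx (hKΩ h)]; simp),
      setIntegral_eq_integral_of_forall_compl_eq_zero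
        (fun x hx => by
          rw [hρ0.2 x fun h => hx (hKΩ h), hρ1.2 x fun h => hx (hKΩ h)]; simp)] at h1
    have iρ : Integrable fun x => ρ x ^2 :=
      integrable_of_off hK (hρ.1.continuous.pow 2) fun x hx => by simp [hρ.2 x hx]
    have iG : Integrable fun x => dd 0 ρ x ^2 + dd 1 ρ x^2 :=
      integrable_of_off hK ((hρ0.1.continuous.pow 2).add (hρ1.1.continuous.pow 2))
        fun x hx => by simp [hρ0.2 x hx, hρ1.2 x hx]
    have dρ : ∀ i x, dd i ρ x = (a x * dd i a x + b x * dd i b x) / Real.sqrt (R x + δ^2) := by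
      intro i x
      have hh := dd_reg (δ := δ) i cd x (hpos x)
      simp only [ρ]
      rw [hh, dd_add i cda contDiff_const, dR]
      have : dd i (fun _ => δ^2) x = 0 := by simp [dd]
      rw [this]
      have := Real.sqrt_pos.2 (hpos x)
      field_simp
      ring
    have hlow : (∫ x, R x) - 2 * δ * (∫ x, Real.sqrt (R x)) ≤ ∫ x, ρ x ^2 := by
      rw [← integral_const_mul, ← integral_sub iR (iS.const_mul _)]
      refine integral_mono (iR.sub (iS.const_mul _)) iρ fun x => ?_
      have hRx : 0 ≤ R x := by simp only [R]; positivity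
      have e1 := Real.sq_sqrt hRx
      have e2 := Real.sq_sqrt (hpos x).le
      have e3 : Real.sqrt (R x + δ^2) ≤ Real.sqrt (R x) + δ := by
        rw [Real.sqrt_le_left (by positivity)]
        nlinarith [Real.sqrt_nonneg (R x)]
      simp only [ρ]
      nlinarith
    have hup : (∫ x, (dd 0 ρ x ^2 + dd 1 ρ x^2)) ≤ ∫ x, (1/2) * (A x + B x) := by
      refine integral_mono iG ((iA.add iB).const_mul _) fun x => ?_
      simp only [dρ, div_pow, Real.sq_sqrt (hpos x).le]
      rw [← add_div, div_le_iff₀ (hpos x)]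
      have e0 : (a x * dd 0 a x + b x * dd 0 b x)^2 ≤ R x *
          ((dd 0 a x + dd 1 ψ x * b x)^2 + (dd 0 b x - dd 1 ψ x * a x)^2) := by
        simp only [R]
        nlinarith [sq_nonneg (a x * (dd 0 b x - dd 1 ψ x * a x)
          - b x * (dd 0 a x + dd 1 ψ x * b x))]
      have e1 : (a x * dd 1 a x + b x * dd 1 b x)^2 ≤ R x *
          ((dd 1 a x - dd 0 ψ x * b x)^2 + (dd 1 b x + dd 0 ψ x * a x)^2) := by
        simp only [R]
        nlinarith [sq_nonneg (a x * (dd 1 b x + dd 0 ψ x * a x)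
          - b x * (dd 1 a x - dd 0 ψ x * b x))]
      have e2 : (1/2) * (A x + B x) =
          ((dd 0 a x + dd 1 ψ x * b x)^2 + (dd 0 b x - dd 1 ψ x * a x)^2)
          + ((dd 1 a x - dd 0 ψ x * b x)^2 + (dd 1 b x + dd 0 ψ x * a x)^2) := by
        simp only [A, B]; ring
      have e3 : 0 ≤ (1/2) * (A x + B x) := by simp only [A, B]; positivity
      have e4 : 0 ≤ (1/2) * (A x + B x) * δ^2 := by positivity
      calc _ ≤ R x * ((1/2) * (A x + B x)) := by rw [e2]; linarith
        _ ≤ _ := by linarith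
    rw [integral_const_mul, integral_add iA iB] at hup
    have : (∫ x, (dd 0 ρ x ^2 + dd 1 ρ x^2)) ≤ N := by linarith
    calc _ ≤ _ := hlow
      _ ≤ _ := h1
      _ ≤ _ := mul_le_mul_of_nonneg_left this hL
  have hS0 : 0 ≤ ∫ x, Real.sqrt (R x) := integral_nonneg fun x => Real.sqrt_nonneg _
  refine le_of_forall_pos_le_add fun η hη => ?_
  have hd : 0 < η / (2 * (∫ x, Real.sqrt (R x)) + 1) := by positivity
  have h2 := step _ hd
  have h3 : 2 * (η / (2 * (∫ x, Real.sqrt (R x)) + 1)) * (∫ x, Real.sqrt (R x)) ≤ η := by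
    rw [mul_assoc, div_mul_eq_mul_div, mul_div_assoc', div_le_iff₀ (by positivity)]
    nlinarith
  linarith

lemma key_PQ {K Ω : Set V2} (hK : IsCompact K) (hKΩ : K ⊆ Ω) {ψ P Q : V2 → ℝ}
    (hψ : ContDiff ℝ (⊤ : ℕ∞) ψ) (hPK : SK K P) (hQK : SK K Q) {s L : ℝ} (hs : 0 ≤ s) (hL : 0 ≤ L)
    (hsψ : ∀ x ∈ K, s ≤ 2 * lap ψ x)
    (hP : ∀ v, H10c Ω v → (∫ x in Ω, (v x)^2) ≤ L * ∫ x in Ω, ‖gradient v x‖^2) :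
    let N := ∫ x, Real.exp (2 * ψ x) * ((dd 0 P x - dd 1 Q x)^2 + (dd 1 P x + dd 0 Q x)^2)
    s * (∫ x, Real.exp (2 * ψ x) * (P x ^2 + Q x^2)) ≤ N ∧
      (∫ x, Real.exp (2 * ψ x) * (P x ^2 + Q x^2)) ≤ L * N := by
  have he : ContDiff ℝ (⊤ : ℕ∞) (fun x => Real.exp (ψ x)) := hψ.exp
  have h := key_ab hK hKΩ hψ (a := fun x => Real.exp (ψ x) * P x)
    (b := fun x => Real.exp (ψ x) * Q x)
    ⟨he.mul hPK.1, fun x hx => by simp [hPK.2 x hx]⟩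
    ⟨he.mul hQK.1, fun x hx => by simp [hQK.2 x hx]⟩ hs hL hsψ hP
  have e2 : ∀ x, Real.exp (2 * ψ x) = Real.exp (ψ x)^2 := fun x => by
    rw [← Real.exp_nat_mul]; norm_num
  simp only [dd_mul _ he hPK.1, dd_mul _ he hQK.1, dd_exp _ hψ] at h
  simp only [e2]
  convert h using 3
  · congr 1; funext x; ring
  · congr 1; funext x; ring
  · congr 1; funext x; ring
  · congr 1; funext x; ring

lemma exists_global {K Ω : Set V2} (hK : IsCompact K) (hΩ : IsOpen Ω) (hKΩ : K ⊆ Ω) {φ : V2 → ℝ}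
    (hφ : ContDiffOn ℝ (⊤ : ℕ∞) φ Ω) :
    ∃ g : V2 → ℝ, ContDiff ℝ (⊤ : ℕ∞) g ∧ ∀ x ∈ K, g =ᶠ[nhds x] φ := by
  obtain ⟨χ, h0, h1, -⟩ := exists_contMDiffMap_zero_one_nhds_of_isClosed (n := (⊤ : ℕ∞))
    (modelWithCornersSelf ℝ V2) hΩ.isClosed_compl hK.isClosed
    (by rw [Set.disjoint_compl_left_iff_subset]; exact hKΩ)
  have hχ : ContDiff ℝ (⊤ : ℕ∞) χ := χ.contMDiff.contDiff
  refine ⟨fun x => χ x * φ x, ?_, ?_⟩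
  · rw [contDiff_iff_contDiffAt]
    intro x
    by_cases hx : x ∈ Ω
    · exact hχ.contDiffAt.mul (hφ.contDiffAt (hΩ.mem_nhds hx))
    · have : (fun x => χ x * φ x) =ᶠ[nhds x] fun _ => 0 := by
        filter_upwards [h0.filter_mono (nhds_le_nhdsSet hx)] with y hy
        simp [hy]
      exact contDiffAt_const.congr_of_eventuallyEq this
  · intro x hx
    filter_upwards [h1.filter_mono (nhds_le_nhdsSet hx)] with y hy
    simp [hy]

lemma lap_congr {f g : V2 → ℝ} {x : V2} (h : f =ᶠ[nhds x] g) : lap f x = lap g x := by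
  unfold lap
  refine Finset.sum_congr rfl fun i _ => ?_
  have : (fun y => fderiv ℝ f y (EuclideanSpace.single i (1:ℝ))) =ᶠ[nhds x]
      (fun y => fderiv ℝ g y (EuclideanSpace.single i (1:ℝ))) := by
    filter_upwards [h.eventuallyEq_nhds] with y hy
    rw [hy.fderiv_eq]
  rw [this.fderiv_eq]

/-- Carleman-type estimate in a bounded open set with small Poincaré constant:
for `-Δφ ≥ s ≥ 1`,
`ε⁻⁴∫e^{-φ}u² + s²∫e^{-φ}u² + ε⁻²∫e^{-φ}|∇u|² + s∫e^{-φ}|∇u|² ≤ C∫e^{-φ}|Δu|²`. -/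
theorem stmt17 (C' : ℝ) (hC' : 1 ≤ C') : ∃ C : ℝ, 0 < C ∧
    ∀ (ε : ℝ), 0 < ε → ∀ (Ω : Set V2), IsOpen Ω → Bornology.IsBounded Ω →
    (∀ v, H10c Ω v → (∫ x in Ω, (v x)^2) ≤ (C'*ε)^2 * ∫ x in Ω, ‖gradient v x‖^2) →
    ∀ (s : ℝ), 1 ≤ s → ∀ (φ : V2 → ℝ), ContDiffOn ℝ (⊤ : ℕ∞) φ Ω →
      (∀ x ∈ Ω, s ≤ -(lap φ x)) →
    ∀ u, H10c Ω u →
      ε^(-4 : ℤ) * (∫ x in Ω, Real.exp (-(φ x)) * (u x)^2)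
        + s^2 * (∫ x in Ω, Real.exp (-(φ x)) * (u x)^2)
        + ε^(-2 : ℤ) * (∫ x in Ω, Real.exp (-(φ x)) * ‖gradient u x‖^2)
        + s * (∫ x in Ω, Real.exp (-(φ x)) * ‖gradient u x‖^2)
      ≤ C * ∫ x in Ω, Real.exp (-(φ x)) * (lap u x)^2 := by
  refine ⟨C'^4 + C'^2 + 2, by positivity, ?_⟩
  intro ε hε Ω hΩ _ hP s hs φ hφ hlap u hu
  have hK : IsCompact (tsupport u) := hu.2.1
  obtain ⟨K, hKdef⟩ : ∃ K, K = tsupport u := ⟨_, rfl⟩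
  rw [← hKdef] at hK
  have hKΩ : K ⊆ Ω := hKdef ▸ hu.2.2
  have hKc := hK.isClosed
  have huK : SK K u := ⟨hu.1, fun x hx => image_eq_zero_of_notMem_tsupport (hKdef ▸ hx)⟩
  obtain ⟨g, hg, hgφ⟩ := exists_global hK hΩ hKΩ hφ
  have hu0 := huK.dd hKc 0
  have hu1 := huK.dd hKc 1
  have hu00 := hu0.dd hKc 0
  have hu11 := hu1.dd hKc 1
  have hψ : ContDiff ℝ (⊤ : ℕ∞) (fun x => (-1/2) * g x) := contDiff_const.mul hg
  have hψ0 : ∀ i, dd i (fun x => (-1/2) * g x) = fun x => (-1/2) * dd i g x := fun i => by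
    funext x; exact dd_const_mul i _ hg
  have hsψ : ∀ x ∈ K, s ≤ 2 * lap (fun x => (-1/2) * g x) x := by
    intro x hx
    have h1 := hlap x (hKΩ hx)
    rw [← lap_congr (hgφ x hx), lap_eq] at h1
    rw [lap_eq, hψ0, hψ0, dd_const_mul 0 _ (contDiff_dd hg 0), dd_const_mul 1 _ (contDiff_dd hg 1)]
    linarith
  have hL : 0 ≤ (C'*ε)^2 := by positivity
  have hs0 : 0 ≤ s := by linarith
  have k1 := key_PQ hK hKΩ hψ huK (Q := fun _ => 0) ⟨contDiff_const, fun _ _ => rfl⟩ hs0 hL hsψ hP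
  have hnu : SK K (fun x => (-1) * dd 1 u x) :=
    ⟨contDiff_const.mul hu1.1, fun x hx => by simp [hu1.2 x hx]⟩
  have k2 := key_PQ hK hKΩ hψ hu0 hnu hs0 hL hsψ hP
  have z : ∀ i x, dd i (fun _ => (0:ℝ)) x = 0 := fun i x => by simp [dd]
  have e2 : ∀ x, 2 * ((-1/2) * g x) = -(g x) := fun x => by ring
  simp only [z, e2] at k1
  simp only [e2, dd_const_mul _ _ hu1.1] at k2
  have I1 : ∫ x in Ω, Real.exp (-(φ x)) * (u x)^2 = ∫ x, Real.exp (-(g x)) * (u x ^2 + 0^2) := by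
    rw [setIntegral_eq_integral_of_forall_compl_eq_zero
      (fun x hx => by rw [huK.2 x fun h => hx (hKΩ h)]; simp)]
    congr 1; funext x
    by_cases hx : x ∈ K
    · rw [(hgφ x hx).eq_of_nhds]; simp
    · simp [huK.2 x hx]
  have I2 : ∫ x in Ω, Real.exp (-(φ x)) * ‖gradient u x‖^2
      = ∫ x, Real.exp (-(g x)) * (dd 0 u x ^2 + dd 1 u x^2) := by
    simp only [norm_gradient_sq]
    rw [setIntegral_eq_integral_of_forall_compl_eq_zero
      (fun x hx => by
        rw [hu0.2 x fun h => hx (hKΩ h), hu1.2 x fun h => hx (hKΩ h)]; simp)]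
    congr 1; funext x
    by_cases hx : x ∈ K
    · rw [(hgφ x hx).eq_of_nhds]
    · simp [hu0.2 x hx, hu1.2 x hx]
  have I3 : ∫ x in Ω, Real.exp (-(φ x)) * (lap u x)^2
      = ∫ x, Real.exp (-(g x)) * (dd 0 (dd 0 u) x + dd 1 (dd 1 u) x)^2 := by
    simp only [lap_eq]
    rw [setIntegral_eq_integral_of_forall_compl_eq_zero
      (fun x hx => by
        rw [hu00.2 x fun h => hx (hKΩ h), hu11.2 x fun h => hx (hKΩ h)]; simp)]
    congr 1; funext x
    by_cases hx : x ∈ K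
    · rw [(hgφ x hx).eq_of_nhds]
    · simp [hu00.2 x hx, hu11.2 x hx]
  have J1 : ∫ x, Real.exp (-(g x)) * ((dd 0 u x - 0)^2 + (dd 1 u x + 0)^2)
      = ∫ x, Real.exp (-(g x)) * (dd 0 u x ^2 + dd 1 u x^2) := by simp
  have J2 : ∫ x, Real.exp (-(g x)) * (dd 0 u x ^2 + (-1 * dd 1 u x)^2)
      = ∫ x, Real.exp (-(g x)) * (dd 0 u x ^2 + dd 1 u x^2) := by simp
  have J3 : ∫ x, Real.exp (-(g x)) * ((dd 0 (dd 0 u) x - -1 * dd 1 (dd 1 u) x)^2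
        + (dd 1 (dd 0 u) x + -1 * dd 0 (dd 1 u) x)^2)
      = ∫ x, Real.exp (-(g x)) * (dd 0 (dd 0 u) x + dd 1 (dd 1 u) x)^2 := by
    congr 1; funext x
    rw [dd_comm hu.1 1 0]; ring
  rw [J1, ← I1, ← I2] at k1
  rw [J2, J3, ← I2, ← I3] at k2
  generalize (∫ x in Ω, Real.exp (-(φ x)) * (u x)^2) = U at *
  generalize (∫ x in Ω, Real.exp (-(φ x)) * ‖gradient u x‖^2) = G at *
  generalize (∫ x in Ω, Real.exp (-(φ x)) * (lap u x)^2) = D at *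
  obtain ⟨k1s, k1e⟩ := k1
  obtain ⟨k2s, k2e⟩ := k2
  have t2 : s^2 * U ≤ D := by nlinarith
  have t3 : ε^(-2 : ℤ) * G ≤ C'^2 * D := by
    have : ε^(-2 : ℤ) * ((C'*ε)^2 * D) = C'^2 * D := by
      rw [zpow_neg]; field_simp
    rw [← this]
    exact mul_le_mul_of_nonneg_left k2e (by positivity)
  have t1 : ε^(-4 : ℤ) * U ≤ C'^4 * D := by
    have : ε^(-4 : ℤ) * ((C'*ε)^2 * ((C'*ε)^2 * D)) = C'^4 * D := by
      rw [zpow_neg]; field_simp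
    rw [← this]
    exact mul_le_mul_of_nonneg_left
      (k1e.trans (mul_le_mul_of_nonneg_left k2e hL)) (by positivity)
  linarith
end
end
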